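/- arXiv:2002.07142 — 3 statements merged into one kernel-verified Lean document; each statement's English description precedes it below -/
import Mathlib

section
/- There exist a function G: ℝ∖{0} → ℝ, a function F: ℝ → ℝ, and a constant C < ∞ with the following properties: G is even, infinitely differentiable on ℝ∖{0}, vanishes outside [−1,1], and G(x) = (1/π)log|x| for all x with 0 < |x| ≤ 1/2; F is infinitely differentiable on all of ℝ; for every x ≠ 0 the principal value (1/π) pv∫_ℝ (G(y) − G(x))/(y−x)² dy exists and equals F(x); and |F(x)| ≤ C(1+|x|)^{−2} and |F′(x)| ≤ C(1+|x|)^{−2} for all x ∈ ℝ. -/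
open MeasureTheory Filter

/-!
The half-Laplacian of `log |x|` vanishes off the origin, because the symmetric second difference
quotient of the logarithm has an explicit primitive that vanishes at both ends. For a cutoff `χ`
equal to `1` near `0`, write `G = π⁻¹ χ log |x| = π⁻¹ (log |x| - H)` with `H = (1 - χ) log |x|`;
then `ΛG = -π⁻¹ ΛH` off the origin. As `H` is smooth and all its derivatives grow more slowly than
`|x|`, one may differentiate under the integral defining `ΛH`, so `F = -π⁻¹ ΛH` is smooth.
Far from the support of `G`, on the other hand, `F x = π⁻¹ ∫ G y / (y - x) ^ 2 dy`, which gives the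
decay of `F` and `F'`.
-/

noncomputable section

open Set Asymptotics Metric
open scoped Topology ContDiff

variable {E : Type*} [NormedAddCommGroup E] [NormedSpace ℝ E]

theorem isBigO_top_of_isBigO_cocompact {X F F' : Type*} [TopologicalSpace X]
    [NormedAddCommGroup F] [NormedAddCommGroup F'] {f : X → F} {g : X → F'} (hf : Continuous f)
    (hg : Continuous g) (hg₀ : ∀ x, g x ≠ 0) (h : f =O[cocompact X] g) : f =O[⊤] g := by
  obtain ⟨c, hc⟩ := h.bound
  obtain ⟨K, hK, hKc⟩ := mem_cocompact.1 hc
  have h_compact : f =O[𝓟 K] g :=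
    (hf.continuousOn.isBigO_principal hK (c := (1 : ℝ)) (by simp)).trans
      (hg.continuousOn.isBigO_rev_principal hK (fun x _ => hg₀ x) 1)
  have h_far : f =O[𝓟 Kᶜ] g := isBigO_principal.2 ⟨c, fun x hx => hKc hx⟩
  simpa using h_compact.sup h_far

theorem iteratedDeriv_eventuallyEq_cocompact {f g : ℝ → E} (h : f =ᶠ[cocompact ℝ] g) (k : ℕ) :
    iteratedDeriv k f =ᶠ[cocompact ℝ] iteratedDeriv k g := by
  obtain ⟨K, hK, hKc⟩ := mem_cocompact.1 h
  filter_upwards [hK.compl_mem_cocompact] with x hx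
  exact (eventuallyEq_of_mem (hK.isClosed.isOpen_compl.mem_nhds hx) hKc).iteratedDeriv_eq k

theorem eventually_cocompact_le_abs (R : ℝ) : ∀ᶠ x : ℝ in cocompact ℝ, R ≤ |x| :=
  (tendsto_norm_cocompact_atTop (E := ℝ)).eventually_ge_atTop R

/-! ### Growth of smooth functions -/

/-- Smooth functions all of whose derivatives are `O((1 + |x|) ^ r)`, with no gain from
differentiating: for `r < 1` a class on which the half-Laplacian is defined everywhere and
commutes with differentiation. -/
structure HasGrowthOrder (r : ℝ) (f : ℝ → E) : Prop where
  contDiff : ContDiff ℝ ∞ f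
  isBigO_iteratedDeriv : ∀ k : ℕ, iteratedDeriv k f =O[⊤] fun x : ℝ => (1 + |x|) ^ r

namespace HasGrowthOrder

variable {r : ℝ} {f : ℝ → E}

theorem of_isBigO_cocompact (hf : ContDiff ℝ ∞ f)
    (h : ∀ k : ℕ, iteratedDeriv k f =O[cocompact ℝ] fun x : ℝ => (1 + |x|) ^ r) :
    HasGrowthOrder r f := by
  have h_pos (x : ℝ) : 0 < 1 + |x| := by positivity
  refine ⟨hf, fun k => isBigO_top_of_isBigO_cocompact
    (hf.continuous_iteratedDeriv k (by exact_mod_cast le_top)) ?_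
    (fun x => (Real.rpow_pos_of_pos (h_pos x) r).ne') (h k)⟩
  exact Continuous.rpow_const (by fun_prop) fun x => .inl (h_pos x).ne'

theorem differentiable (hf : HasGrowthOrder r f) : Differentiable ℝ f :=
  hf.contDiff.differentiable (by simp)

protected theorem deriv (hf : HasGrowthOrder r f) : HasGrowthOrder r (deriv f) where
  contDiff := (contDiff_infty_iff_deriv.1 hf.contDiff).2
  isBigO_iteratedDeriv k := by
    rw [← iteratedDeriv_succ']
    exact hf.isBigO_iteratedDeriv (k + 1)

protected theorem iteratedDeriv (hf : HasGrowthOrder r f) (n : ℕ) :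
    HasGrowthOrder r (iteratedDeriv n f) := by
  induction n with
  | zero => rwa [iteratedDeriv_zero]
  | succ n ih =>
    rw [iteratedDeriv_succ]
    exact ih.deriv

theorem exists_norm_iteratedDeriv_le (hf : HasGrowthOrder r f) (k : ℕ) :
    ∃ C, 0 ≤ C ∧ ∀ x, ‖iteratedDeriv k f x‖ ≤ C * (1 + |x|) ^ r := by
  obtain ⟨C, hC, h⟩ := (hf.isBigO_iteratedDeriv k).exists_nonneg
  refine ⟨C, hC, fun x => ?_⟩
  simpa [abs_of_nonneg (Real.rpow_nonneg (by positivity : 0 ≤ 1 + |x|) r)] using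
    isBigOWith_top.1 h x

end HasGrowthOrder

/-! ### Second difference quotients -/

/-- The symmetric second difference quotient of `f` at `x`; it is `0` for `t = 0`. -/
def symmDiffQuot (f : ℝ → E) (x t : ℝ) : E := (t ^ 2)⁻¹ • (f (x + t) + f (x - t) - (2 : ℝ) • f x)

theorem aestronglyMeasurable_symmDiffQuot {f : ℝ → E} (hf : Continuous f) (x : ℝ)
    (μ : Measure ℝ) : AEStronglyMeasurable (symmDiffQuot f x) μ := by
  have h_inv : Measurable fun t : ℝ => (t ^ 2)⁻¹ := by fun_prop
  have h_diff : Continuous fun t : ℝ => f (x + t) + f (x - t) - (2 : ℝ) • f x := by fun_prop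
  exact h_inv.aestronglyMeasurable.smul h_diff.aestronglyMeasurable

theorem norm_symmDiffQuot_le_of_norm_le {f : ℝ → E} {x t B : ℝ}
    (hB : ∀ y ∈ closedBall x t, ‖f y‖ ≤ B) (ht : 0 ≤ t) :
    ‖symmDiffQuot f x t‖ ≤ 4 * B / t ^ 2 := by
  have h_diff : ‖f (x + t) + f (x - t) - (2 : ℝ) • f x‖ ≤ 4 * B := calc
    _ ≤ ‖f (x + t)‖ + ‖f (x - t)‖ + ‖(2 : ℝ) • f x‖ :=
      (norm_sub_le _ _).trans (by gcongr; exact norm_add_le _ _)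
    _ ≤ B + B + 2 * B := by
      rw [norm_smul, Real.norm_two]
      gcongr <;> exact hB _ (by simp [abs_of_nonneg ht, ht])
    _ = 4 * B := by ring
  rw [symmDiffQuot, norm_smul, norm_inv, norm_pow, Real.norm_eq_abs, sq_abs, inv_mul_eq_div]
  gcongr

theorem norm_symmDiffQuot_le_of_norm_deriv_deriv_le {f : ℝ → E} (hf : Differentiable ℝ f)
    (hf' : Differentiable ℝ (deriv f)) {x t B : ℝ} (ht : 0 < t)
    (hB : ∀ y ∈ closedBall x t, ‖deriv (deriv f) y‖ ≤ B) : ‖symmDiffQuot f x t‖ ≤ 2 * B := by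
  have hB₀ : 0 ≤ B := (norm_nonneg _).trans (hB x (mem_closedBall_self ht.le))
  have h_deriv (s : ℝ) : HasDerivAt (fun s => f (x + s) + f (x - s))
      (deriv f (x + s) - deriv f (x - s)) s := by
    rw [sub_eq_add_neg]
    exact ((hf _).hasDerivAt.comp_const_add x s).add ((hf _).hasDerivAt.comp_const_sub x s)
  have h_deriv_le : ∀ s ∈ Icc 0 t, ‖deriv f (x + s) - deriv f (x - s)‖ ≤ 2 * B * t := by
    rintro s ⟨hs₀, hst⟩
    have := (convex_closedBall x t).norm_image_sub_le_of_norm_deriv_le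
      (fun y _ => hf' y) hB (x := x - s) (y := x + s)
      (by simpa [Real.dist_eq, abs_of_nonneg hs₀]) (by simpa [Real.dist_eq, abs_of_nonneg hs₀])
    refine this.trans ?_
    rw [show x + s - (x - s) = 2 * s by ring, norm_mul, Real.norm_two, Real.norm_of_nonneg hs₀]
    nlinarith
  have h_diff := (convex_Icc 0 t).norm_image_sub_le_of_norm_hasDerivWithin_le
    (fun s _ => (h_deriv s).hasDerivWithinAt) h_deriv_le ⟨le_rfl, ht.le⟩ ⟨ht.le, le_rfl⟩
  simp only [add_zero, sub_zero, ← two_smul ℝ (f x), Real.norm_of_nonneg ht.le] at h_diff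
  rw [symmDiffQuot, norm_smul, norm_inv, norm_pow, Real.norm_of_nonneg ht.le,
    inv_mul_le_iff₀ (by positivity)]
  exact h_diff.trans_eq (by ring)

theorem one_add_abs_rpow_le_mul {r x y t : ℝ} (hr : 0 ≤ r) (hy : y ∈ closedBall x t) :
    (1 + |y|) ^ r ≤ (1 + |x|) ^ r * (1 + t) ^ r := by
  rw [mem_closedBall, Real.dist_eq] at hy
  have ht : 0 ≤ t := (abs_nonneg _).trans hy
  have h_abs : |y| ≤ |y - x| + |x| := by simpa using abs_add_le (y - x) x
  rw [← Real.mul_rpow (by positivity) (by positivity)]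
  gcongr
  nlinarith [abs_nonneg x]

theorem HasGrowthOrder.exists_norm_symmDiffQuot_le {r : ℝ} {f : ℝ → E} (hf : HasGrowthOrder r f)
    (hr : 0 ≤ r) :
    ∃ K, 0 ≤ K ∧ ∀ x t, 0 < t → ‖symmDiffQuot f x t‖ ≤ K * (1 + |x|) ^ r * (1 + t) ^ (r - 2) := by
  obtain ⟨M, hM₀, hM⟩ := hf.exists_norm_iteratedDeriv_le 0
  obtain ⟨N, hN₀, hN⟩ := hf.exists_norm_iteratedDeriv_le 2
  simp only [iteratedDeriv_succ, iteratedDeriv_zero] at hM hN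
  refine ⟨16 * M + 8 * N, by positivity, fun x t ht => ?_⟩
  set W := (1 + |x|) ^ r * (1 + t) ^ r with hW
  have : 0 ≤ W := by positivity
  have h_weight {B : ℝ → E} {C : ℝ} (hC : 0 ≤ C) (hB : ∀ y, ‖B y‖ ≤ C * (1 + |y|) ^ r) :
      ∀ y ∈ closedBall x t, ‖B y‖ ≤ C * W := fun y hy =>
    (hB y).trans (mul_le_mul_of_nonneg_left (one_add_abs_rpow_le_mul hr hy) hC)
  have h_target : (16 * M + 8 * N) * (1 + |x|) ^ r * (1 + t) ^ (r - 2) =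
      (16 * M + 8 * N) * W / (1 + t) ^ 2 := by
    rw [Real.rpow_sub (by positivity), Real.rpow_two, hW]
    ring
  rw [h_target]
  have hMW : 0 ≤ M * W := by positivity
  have hNW : 0 ≤ N * W := by positivity
  rcases le_total t 1 with ht₁ | ht₁
  · refine (norm_symmDiffQuot_le_of_norm_deriv_deriv_le hf.differentiable
      hf.deriv.differentiable ht (h_weight hN₀ hN)).trans ?_
    rw [le_div_iff₀ (by positivity)]
    have h_sq : (1 + t) ^ 2 ≤ 4 := by nlinarith
    calc 2 * (N * W) * (1 + t) ^ 2 ≤ 2 * (N * W) * 4 := by gcongr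
      _ ≤ (16 * M + 8 * N) * W := by linarith
  · refine (norm_symmDiffQuot_le_of_norm_le (h_weight hM₀ hM) ht.le).trans ?_
    rw [div_le_div_iff₀ (by positivity) (by positivity)]
    have h_sq : (1 + t) ^ 2 ≤ 4 * t ^ 2 := by nlinarith
    calc 4 * (M * W) * (1 + t) ^ 2 ≤ 4 * (M * W) * (4 * t ^ 2) := by gcongr
      _ ≤ (16 * M + 8 * N) * W * t ^ 2 := by nlinarith [mul_nonneg hNW (sq_nonneg t)]

theorem integrableOn_one_add_rpow_Ioi {s : ℝ} (hs : s < -1) :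
    IntegrableOn (fun t : ℝ => (1 + t) ^ s) (Ioi 0) := by
  simpa only [add_comm] using integrableOn_add_rpow_Ioi_of_lt hs (by simp : -(1 : ℝ) < 0)

theorem HasGrowthOrder.integrableOn_symmDiffQuot {r : ℝ} {f : ℝ → E} (hf : HasGrowthOrder r f)
    (hr₀ : 0 ≤ r) (hr₁ : r < 1) (x : ℝ) : IntegrableOn (symmDiffQuot f x) (Ioi 0) := by
  obtain ⟨K, -, hK⟩ := hf.exists_norm_symmDiffQuot_le hr₀
  refine ((integrableOn_one_add_rpow_Ioi (by linarith : r - 2 < -1)).const_mul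
    (K * (1 + |x|) ^ r)).mono' (aestronglyMeasurable_symmDiffQuot hf.differentiable.continuous x _)
    ?_
  filter_upwards [ae_restrict_mem measurableSet_Ioi] with t ht using hK x t ht

theorem hasDerivAt_symmDiffQuot {f : ℝ → E} (hf : Differentiable ℝ f) (x t : ℝ) :
    HasDerivAt (fun x => symmDiffQuot f x t) (symmDiffQuot (deriv f) x t) x :=
  ((((hf _).hasDerivAt.comp_add_const x t).add ((hf _).hasDerivAt.comp_sub_const x t)).sub
    ((hf x).hasDerivAt.const_smul (2 : ℝ))).const_smul _

/-- The half-Laplacian `(1 / π) pv ∫ (f y - f x) / (y - x) ^ 2 dy` with the principal value folded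
into an absolutely convergent integral, for `f` that is regular at `x` (cf.
`HasGrowthOrder.hasHalfLaplacianAt`). -/
def halfLaplacian (f : ℝ → E) (x : ℝ) : E := (1 / Real.pi) • ∫ t in Ioi 0, symmDiffQuot f x t

namespace HasGrowthOrder

variable {r : ℝ} {f : ℝ → E}

theorem hasDerivAt_halfLaplacian (hf : HasGrowthOrder r f) (hr₀ : 0 ≤ r) (hr₁ : r < 1) (x : ℝ) :
    HasDerivAt (halfLaplacian f) (halfLaplacian (deriv f) x) x := by
  obtain ⟨K, hK₀, hK⟩ := hf.deriv.exists_norm_symmDiffQuot_le hr₀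
  have h_dominated : ∀ᵐ t ∂volume.restrict (Ioi 0), ∀ z ∈ ball x 1,
      ‖symmDiffQuot (deriv f) z t‖ ≤
        K * ((1 + |x|) ^ r * (1 + 1) ^ r) * (1 + t) ^ (r - 2) := by
    filter_upwards [ae_restrict_mem measurableSet_Ioi] with t (ht : 0 < t) z hz
    refine (hK z t ht).trans ?_
    gcongr
    exact one_add_abs_rpow_le_mul hr₀ (ball_subset_closedBall hz)
  exact (hasDerivAt_integral_of_dominated_loc_of_deriv_le (ball_mem_nhds x one_pos)
    (.of_forall fun z => aestronglyMeasurable_symmDiffQuot hf.differentiable.continuous z _)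
    (hf.integrableOn_symmDiffQuot hr₀ hr₁ x)
    (aestronglyMeasurable_symmDiffQuot hf.deriv.differentiable.continuous x _) h_dominated
    ((integrableOn_one_add_rpow_Ioi (by linarith)).const_mul _)
    (.of_forall fun t z _ => hasDerivAt_symmDiffQuot hf.differentiable z t)).2.const_smul _

theorem iteratedDeriv_halfLaplacian (hf : HasGrowthOrder r f) (hr₀ : 0 ≤ r) (hr₁ : r < 1) (n : ℕ) :
    iteratedDeriv n (halfLaplacian f) = halfLaplacian (iteratedDeriv n f) := by
  induction n with
  | zero => simp only [iteratedDeriv_zero]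
  | succ n ih =>
    rw [iteratedDeriv_succ, ih, iteratedDeriv_succ]
    exact funext fun x => ((hf.iteratedDeriv n).hasDerivAt_halfLaplacian hr₀ hr₁ x).deriv

theorem contDiff_halfLaplacian (hf : HasGrowthOrder r f) (hr₀ : 0 ≤ r) (hr₁ : r < 1) :
    ContDiff ℝ ∞ (halfLaplacian f) := by
  refine contDiff_of_differentiable_iteratedDeriv fun n _ x => ?_
  rw [hf.iteratedDeriv_halfLaplacian hr₀ hr₁]
  exact ((hf.iteratedDeriv n).hasDerivAt_halfLaplacian hr₀ hr₁ x).differentiableAt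

end HasGrowthOrder

/-! ### The half-Laplacian as a principal value -/

/-- Integrability against the Poisson kernel `(1 + y ^ 2)⁻¹`: the condition that makes the
integral defining the half-Laplacian converge away from its singularity. -/
def PoissonIntegrable (f : ℝ → E) : Prop := Integrable fun y : ℝ => (1 + y ^ 2)⁻¹ • f y

namespace PoissonIntegrable

variable {f g : ℝ → E}

theorem const (c : E) : PoissonIntegrable fun _ => c := integrable_inv_one_add_sq.smul_const c

theorem sub (hf : PoissonIntegrable f) (hg : PoissonIntegrable g) :
    PoissonIntegrable fun y => f y - g y := by
  simpa only [PoissonIntegrable, smul_sub, Pi.sub_def] using Integrable.sub hf hg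

theorem of_isBigO_cocompact {r : ℝ} (hr : r < 1) (hf : LocallyIntegrable f)
    (h : f =O[cocompact ℝ] fun y => (1 + |y|) ^ r) : PoissonIntegrable f := by
  have h_kernel : (fun y : ℝ => (1 + y ^ 2)⁻¹) =O[cocompact ℝ] fun y => (1 + |y|) ^ (-2 : ℝ) := by
    refine .of_bound 2 (.of_forall fun y => ?_)
    rw [Real.rpow_neg (by positivity), Real.rpow_two, norm_inv, norm_inv,
      Real.norm_of_nonneg (by positivity), Real.norm_of_nonneg (by positivity),
      inv_le_iff_one_le_mul₀ (by positivity), ← div_eq_mul_inv, div_mul_eq_mul_div,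
      le_div_iff₀ (by positivity)]
    nlinarith [sq_abs y, sq_nonneg (|y| - 1)]
  have h_weight : Integrable fun y : ℝ => (1 + |y|) ^ (-2 : ℝ) • (1 + |y|) ^ r := by
    refine (integrable_one_add_norm (μ := volume) (E := ℝ) (r := 2 - r) (by simp; linarith)).congr
      (.of_forall fun y => ?_)
    dsimp only
    rw [smul_eq_mul, Real.norm_eq_abs, ← Real.rpow_add (by positivity)]
    ring_nf
  refine LocallyIntegrable.integrable_of_isBigO_cocompact ?_ (h_kernel.smul h)
    (h_weight.integrableAtFilter _)
  exact hf.continuous_smul (by fun_prop (disch := intro; positivity))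

theorem integrableOn_inv_sq_smul (hf : PoissonIntegrable f) (x : ℝ) {ε : ℝ} (hε : 0 < ε) :
    IntegrableOn (fun y => ((y - x) ^ 2)⁻¹ • f y) {y | ε < |y - x|} := by
  have h_bound : ∀ y ∈ {y : ℝ | ε < |y - x|},
      ‖(1 + y ^ 2) / (y - x) ^ 2‖ ≤ 2 + (1 + 2 * x ^ 2) / ε ^ 2 := by
    intro y (hy : ε < |y - x|)
    have hyx : 0 < |y - x| := hε.trans hy
    have h_sq : ε ^ 2 ≤ (y - x) ^ 2 := by rw [← sq_abs (y - x)]; gcongr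
    rw [Real.norm_of_nonneg (by positivity), div_le_iff₀ (by rw [← sq_abs]; positivity), add_mul]
    have h_const : 1 + 2 * x ^ 2 ≤ (1 + 2 * x ^ 2) / ε ^ 2 * (y - x) ^ 2 := by
      rw [div_mul_eq_mul_div, le_div_iff₀ (by positivity)]
      gcongr
    nlinarith [sq_nonneg (y - 2 * x)]
  have hS : MeasurableSet {y : ℝ | ε < |y - x|} := measurableSet_lt (by fun_prop) (by fun_prop)
  have h_meas : Measurable fun y : ℝ => (1 + y ^ 2) / (y - x) ^ 2 := by fun_prop
  refine (Integrable.bdd_smul hf.integrableOn _ h_meas.aestronglyMeasurable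
    (ae_restrict_of_forall_mem hS h_bound)).congr (.of_forall fun y => ?_)
  rw [Pi.smul_apply', smul_smul, div_mul_eq_mul_div, mul_inv_cancel₀ (by positivity), one_div]

end PoissonIntegrable

theorem setOf_lt_abs_sub_eq {x ε : ℝ} : {y | ε < |y - x|} = Ioi (x + ε) ∪ Iio (x - ε) := by
  ext y
  simp only [mem_ofPred_eq, mem_union, mem_Ioi, mem_Iio, lt_abs]
  grind

theorem integrableOn_Ioi_comp_add {F : Type*} [NormedAddCommGroup F] {g : ℝ → F} {x ε : ℝ}
    (hg : IntegrableOn g {y | ε < |y - x|}) :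
    IntegrableOn (fun t => g (x + t)) (Ioi ε) := by
  rw [setOf_lt_abs_sub_eq] at hg
  simpa [Function.comp_def] using ((measurePreserving_add_left volume x).integrableOn_comp_preimage
    (measurableEmbedding_addLeft x)).2 hg.left_of_union

theorem integrableOn_Ioi_comp_sub {F : Type*} [NormedAddCommGroup F] {g : ℝ → F} {x ε : ℝ}
    (hg : IntegrableOn g {y | ε < |y - x|}) :
    IntegrableOn (fun t => g (x - t)) (Ioi ε) := by
  rw [setOf_lt_abs_sub_eq] at hg
  simpa [Function.comp_def] using
    ((Measure.measurePreserving_sub_left volume x).integrableOn_comp_preimage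
      (measurableEmbedding_subLeft x)).2 hg.right_of_union

theorem setIntegral_lt_abs_sub {g : ℝ → E} {x ε : ℝ} (hε : 0 ≤ ε)
    (hg : IntegrableOn g {y | ε < |y - x|}) :
    ∫ y in {y | ε < |y - x|}, g y = ∫ t in Ioi ε, (g (x + t) + g (x - t)) := by
  have h_right := (measurePreserving_add_left volume x).setIntegral_preimage_emb
    (measurableEmbedding_addLeft x) g (Ioi (x + ε))
  have h_left := (Measure.measurePreserving_sub_left volume x).setIntegral_preimage_emb
    (measurableEmbedding_subLeft x) g (Iio (x - ε))
  simp only [preimage_const_add_Ioi, preimage_const_sub_Iio, add_sub_cancel_left, sub_sub_cancel]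
    at h_right h_left
  rw [integral_add (integrableOn_Ioi_comp_add hg) (integrableOn_Ioi_comp_sub hg), h_right, h_left]
  rw [setOf_lt_abs_sub_eq] at hg ⊢
  exact setIntegral_union (Ioi_disjoint_Iio_of_le (by linarith)) measurableSet_Iio hg.left_of_union
    hg.right_of_union

/-- The truncated integrals `(1 / π) ∫_{ε < |y - x|} (f y - f x) / (y - x) ^ 2 dy` converge
absolutely and tend to `a` as `ε` decreases to `0`. -/
structure HasHalfLaplacianAt (f : ℝ → E) (a : E) (x : ℝ) : Prop where
  integrableOn : ∀ ε : ℝ, 0 < ε →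
    IntegrableOn (fun y => ((y - x) ^ 2)⁻¹ • (f y - f x)) {y | ε < |y - x|}
  tendsto : Tendsto
    (fun ε : ℝ => (1 / Real.pi) • ∫ y in {y | ε < |y - x|}, ((y - x) ^ 2)⁻¹ • (f y - f x))
    (𝓝[>] 0) (𝓝 a)

namespace HasHalfLaplacianAt

variable {f g : ℝ → E} {a b : E} {x : ℝ}

theorem unique (ha : HasHalfLaplacianAt f a x) (hb : HasHalfLaplacianAt f b x) : a = b :=
  tendsto_nhds_unique ha.tendsto hb.tendsto

theorem sub (hf : HasHalfLaplacianAt f a x) (hg : HasHalfLaplacianAt g b x) :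
    HasHalfLaplacianAt (fun y => f y - g y) (a - b) x := by
  have h_sub (y : ℝ) : ((y - x) ^ 2)⁻¹ • (f y - g y - (f x - g x)) =
      ((y - x) ^ 2)⁻¹ • (f y - f x) - ((y - x) ^ 2)⁻¹ • (g y - g x) := by
    rw [← smul_sub, sub_sub_sub_comm]
  constructor <;> simp only [h_sub]
  · exact fun ε hε => (hf.integrableOn ε hε).sub (hg.integrableOn ε hε)
  · refine (hf.tendsto.sub hg.tendsto).congr' ?_
    filter_upwards [self_mem_nhdsWithin] with ε hε
    rw [integral_sub (hf.integrableOn ε hε) (hg.integrableOn ε hε), smul_sub]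

theorem const_smul (hf : HasHalfLaplacianAt f a x) (c : ℝ) :
    HasHalfLaplacianAt (fun y => c • f y) (c • a) x := by
  have h_smul (y : ℝ) :
      ((y - x) ^ 2)⁻¹ • (c • f y - c • f x) = c • ((y - x) ^ 2)⁻¹ • (f y - f x) := by
    rw [← smul_sub, smul_comm]
  constructor <;> simp only [h_smul]
  · exact fun ε hε => (hf.integrableOn ε hε).smul c
  · simpa only [integral_smul, smul_comm (1 / Real.pi) c] using hf.tendsto.const_smul c

end HasHalfLaplacianAt

theorem inv_sq_smul_add_eq_symmDiffQuot (f : ℝ → E) (x t : ℝ) :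
    ((x + t - x) ^ 2)⁻¹ • (f (x + t) - f x) + ((x - t - x) ^ 2)⁻¹ • (f (x - t) - f x) =
      symmDiffQuot f x t := by
  rw [add_sub_cancel_left, sub_sub_cancel_left, neg_sq, ← smul_add, symmDiffQuot, two_smul]
  congr 1
  abel

namespace PoissonIntegrable

variable {f : ℝ → E}

theorem integrableOn_truncation (hf : PoissonIntegrable f) (x : ℝ) {ε : ℝ} (hε : 0 < ε) :
    IntegrableOn (fun y => ((y - x) ^ 2)⁻¹ • (f y - f x)) {y | ε < |y - x|} :=
  (hf.sub (.const (f x))).integrableOn_inv_sq_smul x hε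

theorem integrableOn_symmDiffQuot (hf : PoissonIntegrable f) (x : ℝ) {ε : ℝ} (hε : 0 < ε) :
    IntegrableOn (symmDiffQuot f x) (Ioi ε) := by
  have h_trunc := hf.integrableOn_truncation x hε
  exact ((integrableOn_Ioi_comp_add h_trunc).add (integrableOn_Ioi_comp_sub h_trunc)).congr
    (.of_forall (inv_sq_smul_add_eq_symmDiffQuot f x))

theorem hasHalfLaplacianAt_of_tendsto {a : E} {x : ℝ} (hf : PoissonIntegrable f)
    (h : Tendsto (fun ε => (1 / Real.pi) • ∫ t in Ioi ε, symmDiffQuot f x t) (𝓝[>] 0) (𝓝 a)) :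
    HasHalfLaplacianAt f a x where
  integrableOn _ hε := hf.integrableOn_truncation x hε
  tendsto := by
    refine h.congr' ?_
    filter_upwards [self_mem_nhdsWithin] with ε (hε : 0 < ε)
    simp only [setIntegral_lt_abs_sub hε.le (hf.integrableOn_truncation x hε),
      inv_sq_smul_add_eq_symmDiffQuot]

end PoissonIntegrable

theorem HasGrowthOrder.hasHalfLaplacianAt {r : ℝ} {f : ℝ → E} (hf : HasGrowthOrder r f)
    (hr₀ : 0 ≤ r) (hr₁ : r < 1) (x : ℝ) : HasHalfLaplacianAt f (halfLaplacian f x) x := by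
  have hf_poisson : PoissonIntegrable f := .of_isBigO_cocompact hr₁
    hf.differentiable.continuous.locallyIntegrable ((hf.isBigO_iteratedDeriv 0).mono le_top)
  refine hf_poisson.hasHalfLaplacianAt_of_tendsto (.const_smul ?_ _)
  have h_cover : AECover (volume.restrict (Ioi (0 : ℝ))) (𝓝[>] 0) fun ε : ℝ => Ioi ε :=
    aecover_Ioi_of_Ioi nhdsWithin_le_nhds
  refine (h_cover.integral_tendsto_of_countably_generated
    (hf.integrableOn_symmDiffQuot hr₀ hr₁ x)).congr' ?_
  filter_upwards [self_mem_nhdsWithin] with ε (hε : 0 < ε)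
  rw [Measure.restrict_restrict measurableSet_Ioi, inter_eq_left.2 (Ioi_subset_Ioi hε.le)]

theorem setIntegral_inv_sq_smul_sub_of_eqOn_zero {f : ℝ → E} {x δ ε : ℝ} (hε : 0 < ε) (hεδ : ε < δ)
    (h : EqOn f 0 (ball x δ)) :
    ∫ y in {y | ε < |y - x|}, ((y - x) ^ 2)⁻¹ • (f y - f x) = ∫ y, ((y - x) ^ 2)⁻¹ • f y := by
  simp only [h (mem_ball_self (hε.trans hεδ)), Pi.zero_apply, sub_zero]
  refine setIntegral_eq_integral_of_forall_compl_eq_zero fun y hy => ?_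
  rw [h (mem_ball.2 ((not_lt.1 hy).trans_lt hεδ)), Pi.zero_apply, smul_zero]

theorem PoissonIntegrable.hasHalfLaplacianAt_of_eqOn_zero {f : ℝ → E} (hf : PoissonIntegrable f)
    {x δ : ℝ} (hδ : 0 < δ) (h : EqOn f 0 (ball x δ)) :
    HasHalfLaplacianAt f ((1 / Real.pi) • ∫ y, ((y - x) ^ 2)⁻¹ • f y) x where
  integrableOn _ hε := hf.integrableOn_truncation x hε
  tendsto := by
    refine tendsto_const_nhds.congr' ?_
    filter_upwards [self_mem_nhdsWithin, nhdsWithin_le_nhds (Iio_mem_nhds hδ)] with ε hε hεδ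
    rw [setIntegral_inv_sq_smul_sub_of_eqOn_zero hε hεδ h]

/-! ### The half-Laplacian of the logarithm -/

theorem integral_Ioi_of_hasDerivAt_off_countable_of_tendsto [CompleteSpace E] {f f' : ℝ → E}
    {a : ℝ} {m : E} {s : Set ℝ} (hs : s.Countable) (hf : ContinuousOn f (Ici a))
    (hderiv : ∀ t ∈ Ioi a \ s, HasDerivAt f (f' t) t) (hf' : IntegrableOn f' (Ioi a))
    (hm : Tendsto f atTop (𝓝 m)) : ∫ t in Ioi a, f' t = m - f a := by
  refine tendsto_nhds_unique (intervalIntegral_tendsto_integral_Ioi a hf' tendsto_id)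
    ((hm.sub_const (f a)).congr' ?_)
  filter_upwards [eventually_ge_atTop a] with b hab
  refine (integral_eq_of_hasDerivAt_off_countable_of_le f f' hab hs (hf.mono Icc_subset_Ici_self)
    (fun t ht => hderiv t ⟨ht.1.1, ht.2⟩) ?_).symm
  exact (intervalIntegrable_iff_integrableOn_Ioc_of_le hab).2 (hf'.mono_set Ioc_subset_Ioi_self)

theorem smul_symmDiffQuot (f : ℝ → E) (x t : ℝ) :
    t • symmDiffQuot f x t = t⁻¹ • (f (x + t) + f (x - t) - (2 : ℝ) • f x) := by
  rcases eq_or_ne t 0 with rfl | ht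
  · simp
  · rw [symmDiffQuot, smul_smul]
    congr 1
    field_simp

theorem tendsto_smul_symmDiffQuot {f : ℝ → E} {x : ℝ} (hf : DifferentiableAt ℝ f x) :
    Tendsto (fun t => t • symmDiffQuot f x t) (𝓝[≠] 0) (𝓝 0) := by
  have h_add : HasDerivAt (fun t => f (x + t)) (deriv f x) 0 :=
    HasDerivAt.comp_const_add x 0 (by simpa using hf.hasDerivAt)
  have h_sub : HasDerivAt (fun t => f (x - t)) (-deriv f x) 0 :=
    HasDerivAt.comp_const_sub x 0 (by simpa using hf.hasDerivAt)
  simpa [smul_symmDiffQuot, two_smul] using (h_add.add h_sub).tendsto_slope_zero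

section Log

theorem mul_symmDiffQuot (f : ℝ → ℝ) (x t : ℝ) :
    t * symmDiffQuot f x t = (f (x + t) + f (x - t) - 2 * f x) / t := by
  rw [← smul_eq_mul, smul_symmDiffQuot, smul_eq_mul, smul_eq_mul, inv_mul_eq_div]

theorem hasDerivAt_mul_symmDiffQuot_mul_log {x t : ℝ} (ht : t ≠ 0) (h_add : x + t ≠ 0)
    (h_sub : x - t ≠ 0) :
    HasDerivAt (fun t => t * symmDiffQuot (fun y => y * Real.log y) x t)
      (-x * symmDiffQuot Real.log x t) t := by
  simp only [mul_symmDiffQuot]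
  have h_num := (((Real.hasDerivAt_mul_log h_add).comp_const_add x t).add
    ((Real.hasDerivAt_mul_log h_sub).comp_const_sub x t)).sub_const (2 * (x * Real.log x))
  refine (h_num.div (hasDerivAt_id t) ht).congr_deriv ?_
  simp only [symmDiffQuot, smul_eq_mul, id_eq, Pi.add_apply]
  field_simp
  ring

theorem tendsto_mul_symmDiffQuot_mul_log_atTop (x : ℝ) :
    Tendsto (fun t => t * symmDiffQuot (fun y => y * Real.log y) x t) atTop (𝓝 0) := by
  have h_add := Real.tendsto_log_comp_add_sub_log x
  have h_sub := Real.tendsto_log_comp_add_sub_log (-x)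
  have h_log : Tendsto (fun t => Real.log t / t) atTop (𝓝 0) :=
    Real.isLittleO_log_id_atTop.tendsto_div_nhds_zero
  have h_lim := ((h_add.sub h_sub).add (h_log.const_mul (2 * x))).add
    (tendsto_inv_atTop_zero.mul
      (((h_add.add h_sub).const_mul x).sub_const (2 * (x * Real.log x))))
  simp only [sub_self, mul_zero, zero_mul, add_zero] at h_lim
  refine h_lim.congr' ?_
  filter_upwards [eventually_gt_atTop 0] with t ht
  rw [mul_symmDiffQuot, ← Real.log_neg_eq_log (x - t), neg_sub, ← sub_eq_add_neg, add_comm x t]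
  field_simp
  ring

theorem locallyIntegrable_log : LocallyIntegrable Real.log := by
  refine locallyIntegrable_iff.2 fun K hK => ?_
  refine IntegrableOn.mono_set ?_ hK.isBounded.subset_Icc_sInf_sSup
  rw [integrableOn_Icc_iff_integrableOn_Ioc]
  exact intervalIntegral.intervalIntegrable_log'.1

theorem iteratedDeriv_succ_real_log (k : ℕ) (x : ℝ) :
    iteratedDeriv (k + 1) Real.log x = (-1) ^ k * k.factorial * x ^ (-1 - k : ℤ) := by
  rw [iteratedDeriv_succ', Real.deriv_log', iteratedDeriv_eq_iterate]
  exact iter_deriv_inv k x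

theorem isBigO_log_cocompact {r : ℝ} (hr : 0 < r) :
    Real.log =O[cocompact ℝ] fun x => (1 + |x|) ^ r := by
  have h_abs : (fun x : ℝ => Real.log |x|) =O[cocompact ℝ] fun x => |x| ^ r :=
    ((isLittleO_log_rpow_atTop hr).comp_tendsto (tendsto_norm_cocompact_atTop (E := ℝ))).isBigO
  simp only [Real.log_abs] at h_abs
  refine h_abs.trans (.of_norm_le fun x => ?_)
  rw [Real.norm_of_nonneg (by positivity)]
  gcongr
  linarith

theorem isBigO_iteratedDeriv_log_cocompact {r : ℝ} (hr : 0 < r) (k : ℕ) :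
    iteratedDeriv k Real.log =O[cocompact ℝ] fun x => (1 + |x|) ^ r := by
  cases k with
  | zero => simpa only [iteratedDeriv_zero] using isBigO_log_cocompact hr
  | succ k =>
    refine .of_bound k.factorial ?_
    filter_upwards [eventually_cocompact_le_abs 1] with x hx
    have h_zpow : |x| ^ (-1 - k : ℤ) ≤ 1 := zpow_le_one_of_nonpos₀ hx (by lia)
    have h_rpow : 1 ≤ (1 + |x|) ^ r := Real.one_le_rpow (by linarith) hr.le
    rw [iteratedDeriv_succ_real_log, norm_mul, norm_mul, norm_pow, norm_neg, norm_one, one_pow,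
      one_mul, norm_zpow, Real.norm_natCast, Real.norm_eq_abs, Real.norm_of_nonneg (by positivity)]
    gcongr
    exact h_zpow.trans h_rpow

theorem poissonIntegrable_log : PoissonIntegrable Real.log :=
  .of_isBigO_cocompact one_half_lt_one locallyIntegrable_log (isBigO_log_cocompact one_half_pos)

theorem integral_Ioi_symmDiffQuot_log {x ε : ℝ} (hx : x ≠ 0) (hε : 0 < ε) :
    ∫ t in Ioi ε, symmDiffQuot Real.log x t =
      x⁻¹ * (ε * symmDiffQuot (fun y => y * Real.log y) x ε) := by
  have h_cont : ContinuousOn (fun t => t * symmDiffQuot (fun y => y * Real.log y) x t) (Ici ε) := by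
    simp only [mul_symmDiffQuot]
    have := Real.continuous_mul_log
    refine ContinuousOn.div (by fun_prop) continuousOn_id fun t ht => (hε.trans_le ht).ne'
  have h_deriv : ∀ t ∈ Ioi ε \ {x, -x},
      HasDerivAt (fun t => t * symmDiffQuot (fun y => y * Real.log y) x t)
        (-x * symmDiffQuot Real.log x t) t := by
    rintro t ⟨ht, ht_ne⟩
    simp only [mem_insert_iff, mem_singleton_iff, not_or] at ht_ne
    exact hasDerivAt_mul_symmDiffQuot_mul_log (hε.trans ht).ne' (by grind) (by grind)
  have h_ftc := integral_Ioi_of_hasDerivAt_off_countable_of_tendsto (to_countable _) h_cont h_deriv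
    ((poissonIntegrable_log.integrableOn_symmDiffQuot x hε).const_mul (-x))
    (tendsto_mul_symmDiffQuot_mul_log_atTop x)
  rw [integral_const_mul, zero_sub, neg_mul, neg_inj] at h_ftc
  rw [← h_ftc, inv_mul_cancel_left₀ hx]

theorem hasHalfLaplacianAt_log {x : ℝ} (hx : x ≠ 0) : HasHalfLaplacianAt Real.log 0 x := by
  refine poissonIntegrable_log.hasHalfLaplacianAt_of_tendsto ?_
  have h_zero := tendsto_smul_symmDiffQuot (Real.hasDerivAt_mul_log hx).differentiableAt
  have h_lim := ((h_zero.mono_left (nhdsGT_le_nhdsNE 0)).const_mul x⁻¹).const_smul (1 / Real.pi)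
  rw [mul_zero, smul_zero] at h_lim
  refine h_lim.congr' ?_
  filter_upwards [self_mem_nhdsWithin] with ε hε
  rw [integral_Ioi_symmDiffQuot_log hx hε, smul_eq_mul ε]

end Log

/-! ### The half-Laplacian off the support -/

theorem PoissonIntegrable.of_integrable {f : ℝ → E} (hf : Integrable f) : PoissonIntegrable f := by
  refine Integrable.bdd_smul hf 1 (by fun_prop) (.of_forall fun y => ?_)
  rw [norm_inv, Real.norm_of_nonneg (by positivity)]
  exact inv_le_one_of_one_le₀ (by linarith [sq_nonneg y])

/-- The integral of `f` against the kernel `(y - x) ^ (-n)`, meant for `x` off the support of `f`;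
for `n = 2` it is `π` times the half-Laplacian of `f` there. -/
def invPowPotential (n : ℕ) (f : ℝ → E) (x : ℝ) : E := ∫ y, ((y - x) ^ n)⁻¹ • f y

section InvPowPotential

variable {f : ℝ → E} {x δ : ℝ}

theorem norm_inv_pow_smul_le_of_eqOn_zero (hδ : 0 < δ) (h : EqOn f 0 (ball x δ)) (n : ℕ) (y : ℝ) :
    ‖((y - x) ^ n)⁻¹ • f y‖ ≤ (δ ^ n)⁻¹ * ‖f y‖ := by
  by_cases hy : y ∈ ball x δ
  · simp [h hy]
  · rw [norm_smul, norm_inv, norm_pow, ← dist_eq_norm]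
    gcongr
    exact not_lt.1 hy

theorem aestronglyMeasurable_inv_pow_smul (hf : AEStronglyMeasurable f) (n : ℕ) (x : ℝ) :
    AEStronglyMeasurable fun y => ((y - x) ^ n)⁻¹ • f y := by
  have h_kernel : Measurable fun y : ℝ => ((y - x) ^ n)⁻¹ := by fun_prop
  exact h_kernel.aestronglyMeasurable.smul hf

theorem norm_invPowPotential_le (hf : Integrable f) (hδ : 0 < δ) (h : EqOn f 0 (ball x δ)) (n : ℕ) :
    ‖invPowPotential n f x‖ ≤ (δ ^ n)⁻¹ * ∫ y, ‖f y‖ := by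
  rw [← integral_const_mul]
  exact norm_integral_le_of_norm_le (hf.norm.const_mul _)
    (.of_forall (norm_inv_pow_smul_le_of_eqOn_zero hδ h n))

theorem hasDerivAt_inv_sub_pow {y z : ℝ} (hyz : y ≠ z) (n : ℕ) :
    HasDerivAt (fun z => ((y - z) ^ n)⁻¹) (n * ((y - z) ^ (n + 1))⁻¹) z := by
  have h_sub : y - z ≠ 0 := sub_ne_zero.2 hyz
  refine ((((hasDerivAt_id z).const_sub y).pow n).inv (pow_ne_zero n h_sub)).congr_deriv ?_
  cases n with
  | zero => simp
  | succ n =>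
    simp only [id_eq, Pi.pow_apply, Nat.add_sub_cancel]
    field_simp
    ring

theorem hasDerivAt_invPowPotential (hf : Integrable f) (hδ : 0 < δ) (h : EqOn f 0 (ball x δ))
    (n : ℕ) :
    HasDerivAt (invPowPotential n f) ((n : ℝ) • invPowPotential (n + 1) f x) x := by
  have h_near {z : ℝ} (hz : z ∈ ball x (δ / 2)) : EqOn f 0 (ball z (δ / 2)) := by
    refine h.mono (ball_subset_ball' ?_)
    linarith [mem_ball.1 hz]
  have h_deriv (y z : ℝ) (hz : z ∈ ball x (δ / 2)) : HasDerivAt (fun z => ((y - z) ^ n)⁻¹ • f y)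
      ((n : ℝ) • ((y - z) ^ (n + 1))⁻¹ • f y) z := by
    by_cases hy : f y = 0
    · simpa [hy] using hasDerivAt_const z (0 : E)
    · have hyz : y ≠ z := by
        rintro rfl
        exact hy (h_near hz (mem_ball_self (by positivity)))
      simpa only [smul_smul] using (hasDerivAt_inv_sub_pow hyz n).smul_const (f y)
  have h_bound (y z : ℝ) (hz : z ∈ ball x (δ / 2)) :
      ‖(n : ℝ) • ((y - z) ^ (n + 1))⁻¹ • f y‖ ≤ n * (((δ / 2) ^ (n + 1))⁻¹ * ‖f y‖) := by
    rw [norm_smul, Real.norm_natCast]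
    gcongr
    exact norm_inv_pow_smul_le_of_eqOn_zero (by positivity) (h_near hz) (n + 1) y
  have h_int : Integrable fun y => ((y - x) ^ n)⁻¹ • f y :=
    (hf.norm.const_mul _).mono' (aestronglyMeasurable_inv_pow_smul hf.1 n x)
      (.of_forall (norm_inv_pow_smul_le_of_eqOn_zero hδ h n))
  have h_diff := (hasDerivAt_integral_of_dominated_loc_of_deriv_le
    (ball_mem_nhds x (half_pos hδ))
    (.of_forall (aestronglyMeasurable_inv_pow_smul hf.1 n)) h_int
    ((aestronglyMeasurable_inv_pow_smul hf.1 (n + 1) x).const_smul (n : ℝ))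
    (.of_forall h_bound) ((hf.norm.const_mul _).const_mul _) (.of_forall h_deriv)).2
  rwa [integral_smul] at h_diff

theorem eventually_cocompact_eqOn_zero_ball {M : Type*} [Zero M] {f : ℝ → M}
    (hf : HasCompactSupport f) :
    ∀ᶠ x in cocompact ℝ, EqOn f 0 (ball x ((1 + |x|) / 4)) := by
  obtain ⟨R, hR₀, hR⟩ := hf.isBounded.subset_closedBall_lt 0 0
  filter_upwards [eventually_cocompact_le_abs (2 * R + 1)] with x hx y hy
  refine image_eq_zero_of_notMem_tsupport fun hy_mem => ?_
  have h_abs : |y| ≤ R := by simpa using hR hy_mem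
  rw [mem_ball, Real.dist_eq, abs_sub_comm] at hy
  linarith [abs_sub_abs_le_abs_sub x y]

theorem isBigO_invPowPotential_cocompact (hf : Integrable f) (hf_supp : HasCompactSupport f)
    (n : ℕ) : invPowPotential n f =O[cocompact ℝ] fun x => ((1 + |x|) ^ n)⁻¹ := by
  refine .of_bound (4 ^ n * ∫ y, ‖f y‖) ?_
  filter_upwards [eventually_cocompact_eqOn_zero_ball hf_supp] with x hx
  refine (norm_invPowPotential_le hf (by positivity) hx n).trans_eq ?_
  rw [norm_inv, Real.norm_of_nonneg (by positivity), div_pow, inv_div]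
  ring

theorem eventuallyEq_invPowPotential_of_hasHalfLaplacianAt {F : ℝ → E} (hf : Integrable f)
    (hf_supp : HasCompactSupport f) (hF : ∀ᶠ x in cocompact ℝ, HasHalfLaplacianAt f (F x) x) :
    F =ᶠ[cocompact ℝ] fun x => (1 / Real.pi) • invPowPotential 2 f x := by
  filter_upwards [hF, eventually_cocompact_eqOn_zero_ball hf_supp] with x hFx hx
  exact hFx.unique
    ((PoissonIntegrable.of_integrable hf).hasHalfLaplacianAt_of_eqOn_zero (by positivity) hx)

theorem deriv_invPowPotential_eventuallyEq (hf : Integrable f) (hf_supp : HasCompactSupport f)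
    (n : ℕ) :
    deriv (invPowPotential n f) =ᶠ[cocompact ℝ] fun x => (n : ℝ) • invPowPotential (n + 1) f x := by
  filter_upwards [eventually_cocompact_eqOn_zero_ball hf_supp] with x hx
  exact (hasDerivAt_invPowPotential hf (by positivity) hx n).deriv

theorem isBigO_cocompact_of_hasHalfLaplacianAt {F : ℝ → E} (hf : Integrable f)
    (hf_supp : HasCompactSupport f) (hF : ∀ᶠ x in cocompact ℝ, HasHalfLaplacianAt f (F x) x) :
    F =O[cocompact ℝ] fun x => ((1 + |x|) ^ 2)⁻¹ :=
  (eventuallyEq_invPowPotential_of_hasHalfLaplacianAt hf hf_supp hF).trans_isBigO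
    ((isBigO_invPowPotential_cocompact hf hf_supp 2).const_smul_left _)

theorem isBigO_deriv_cocompact_of_hasHalfLaplacianAt {F : ℝ → E} (hf : Integrable f)
    (hf_supp : HasCompactSupport f) (hF : ∀ᶠ x in cocompact ℝ, HasHalfLaplacianAt f (F x) x) :
    deriv F =O[cocompact ℝ] fun x => ((1 + |x|) ^ 3)⁻¹ := by
  have h_deriv := iteratedDeriv_eventuallyEq_cocompact
    (eventuallyEq_invPowPotential_of_hasHalfLaplacianAt hf hf_supp hF) 1
  simp only [iteratedDeriv_one] at h_deriv
  refine (h_deriv.trans (.of_forall fun x => deriv_fun_const_smul_field _ _)).trans_isBigO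
    (.const_smul_left ?_ _)
  exact (deriv_invPowPotential_eventuallyEq hf hf_supp 2).trans_isBigO
    ((isBigO_invPowPotential_cocompact hf hf_supp 3).const_smul_left _)

end InvPowPotential

theorem isBigO_inv_one_add_abs_pow_of_le {m n : ℕ} (hmn : m ≤ n) (l : Filter ℝ) :
    (fun x : ℝ => ((1 + |x|) ^ n)⁻¹) =O[l] fun x => ((1 + |x|) ^ m)⁻¹ := by
  refine .of_norm_le fun x => ?_
  rw [Real.norm_of_nonneg (by positivity)]
  gcongr
  exact le_add_of_nonneg_right (abs_nonneg x)

theorem exists_norm_le_div_one_add_abs_pow {F : Type*} [NormedAddCommGroup F] {f : ℝ → F} {n : ℕ}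
    (hf : Continuous f) (h : f =O[cocompact ℝ] fun x => ((1 + |x|) ^ n)⁻¹) :
    ∃ C, ∀ x, ‖f x‖ ≤ C / (1 + |x|) ^ n := by
  have h_pos (x : ℝ) : 0 < (1 + |x|) ^ n := by positivity
  obtain ⟨C, hC⟩ := (isBigO_top_of_isBigO_cocompact hf
    (Continuous.inv₀ (by fun_prop) fun x => (h_pos x).ne') (fun x => (inv_pos.2 (h_pos x)).ne')
    h).bound
  refine ⟨C, fun x => ?_⟩
  simpa only [Pi.inv_apply, norm_inv, Real.norm_of_nonneg (h_pos x).le, div_eq_mul_inv] using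
    eventually_top.1 hC x

/-! ### The approximate Green's function -/

section Green

variable (χ : ContDiffBump (0 : ℝ))

/-- The fundamental solution `π⁻¹ log |x|` of the half-Laplacian, cut off by `χ`; recall that
`Real.log x` is `log |x|`. -/
def approxGreen (x : ℝ) : ℝ := (1 / Real.pi) * (χ x * Real.log x)

/-- The smooth part `(1 - χ) log |x|` of the logarithm that the cutoff `χ` removes. -/
def logTail (x : ℝ) : ℝ := (1 - χ x) * Real.log x

/-- The smooth function that agrees off the origin with the half-Laplacian of `approxGreen χ`. -/
def greenError (x : ℝ) : ℝ := (1 / Real.pi) * -halfLaplacian (logTail χ) x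

theorem approxGreen_eq (x : ℝ) : approxGreen χ x = (1 / Real.pi) • (Real.log x - logTail χ x) := by
  rw [approxGreen, logTail, smul_eq_mul]
  ring

theorem approxGreen_neg (x : ℝ) : approxGreen χ (-x) = approxGreen χ x := by
  rw [approxGreen, approxGreen, χ.neg, Real.log_neg_eq_log]

theorem approxGreen_of_abs_le {x : ℝ} (hx : |x| ≤ χ.rIn) :
    approxGreen χ x = (1 / Real.pi) * Real.log |x| := by
  rw [approxGreen, χ.one_of_mem_closedBall (by simpa using hx), one_mul, Real.log_abs]

theorem approxGreen_of_le_abs {x : ℝ} (hx : χ.rOut ≤ |x|) : approxGreen χ x = 0 := by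
  rw [approxGreen, χ.zero_of_le_dist (by simpa using hx), zero_mul, mul_zero]

theorem contDiffOn_approxGreen : ContDiffOn ℝ ∞ (approxGreen χ) {0}ᶜ := fun _ hx =>
  (contDiffAt_const.mul (χ.contDiffAt.mul (Real.contDiffAt_log.2 hx))).contDiffWithinAt

theorem hasCompactSupport_approxGreen : HasCompactSupport (approxGreen χ) :=
  χ.hasCompactSupport.mul_right.mul_left

theorem integrable_approxGreen : Integrable (approxGreen χ) :=
  (locallyIntegrable_log.integrable_smul_left_of_hasCompactSupport χ.continuous
    χ.hasCompactSupport).const_mul _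

theorem contDiff_logTail : ContDiff ℝ ∞ (logTail χ) := by
  refine contDiff_iff_contDiffAt.2 fun x => ?_
  rcases eq_or_ne x 0 with rfl | hx
  · refine contDiffAt_const (c := (0 : ℝ)).congr_of_eventuallyEq ?_
    filter_upwards [χ.eventuallyEq_one] with y hy
    rw [logTail, hy, Pi.one_apply, sub_self, zero_mul]
  · exact (contDiffAt_const.sub χ.contDiffAt).mul (Real.contDiffAt_log.2 hx)

theorem logTail_eventuallyEq_log : logTail χ =ᶠ[cocompact ℝ] Real.log := by
  filter_upwards [eventually_cocompact_le_abs χ.rOut] with x hx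
  rw [logTail, χ.zero_of_le_dist (by simpa using hx), sub_zero, one_mul]

theorem hasGrowthOrder_logTail {r : ℝ} (hr : 0 < r) : HasGrowthOrder r (logTail χ) :=
  .of_isBigO_cocompact (contDiff_logTail χ) fun k =>
    (iteratedDeriv_eventuallyEq_cocompact (logTail_eventuallyEq_log χ) k).trans_isBigO
      (isBigO_iteratedDeriv_log_cocompact hr k)

theorem contDiff_greenError : ContDiff ℝ ∞ (greenError χ) :=
  contDiff_const.mul ((hasGrowthOrder_logTail χ one_half_pos).contDiff_halfLaplacian
    one_half_pos.le one_half_lt_one).neg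

theorem hasHalfLaplacianAt_approxGreen {x : ℝ} (hx : x ≠ 0) :
    HasHalfLaplacianAt (approxGreen χ) (greenError χ x) x := by
  have h_tail := (hasGrowthOrder_logTail χ one_half_pos).hasHalfLaplacianAt
    one_half_pos.le one_half_lt_one x
  simpa only [greenError, funext (approxGreen_eq χ), zero_sub, smul_eq_mul] using
    ((hasHalfLaplacianAt_log hx).sub h_tail).const_smul (1 / Real.pi)

theorem exists_abs_greenError_le : ∃ C, ∀ x,
    |greenError χ x| ≤ C / (1 + |x|) ^ 2 ∧ |deriv (greenError χ) x| ≤ C / (1 + |x|) ^ 2 := by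
  have hG := integrable_approxGreen χ
  have hG_supp := hasCompactSupport_approxGreen χ
  have h_pv : ∀ᶠ x in cocompact ℝ, HasHalfLaplacianAt (approxGreen χ) (greenError χ x) x := by
    filter_upwards [eventually_cocompact_le_abs 1] with x hx
    exact hasHalfLaplacianAt_approxGreen χ (abs_pos.1 (one_pos.trans_le hx))
  obtain ⟨C₀, hC₀⟩ := exists_norm_le_div_one_add_abs_pow (contDiff_greenError χ).continuous
    (isBigO_cocompact_of_hasHalfLaplacianAt hG hG_supp h_pv)
  obtain ⟨C₁, hC₁⟩ := exists_norm_le_div_one_add_abs_pow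
    ((contDiff_greenError χ).continuous_deriv (by simp))
    ((isBigO_deriv_cocompact_of_hasHalfLaplacianAt hG hG_supp h_pv).trans
      (isBigO_inv_one_add_abs_pow_of_le (by simp : 2 ≤ 3) _))
  refine ⟨max C₀ C₁, fun x => ⟨(hC₀ x).trans ?_, (hC₁ x).trans ?_⟩⟩
  · gcongr
    exact le_max_left _ _
  · gcongr
    exact le_max_right _ _

end Green

end

/-- Existence of an approximate Green's function `G` of the half-Laplacian:
`G` is even, smooth away from `0`, supported in `[-1,1]`, equal to `(1/π) log|x|`
near the origin, and `ΛG - δ` extends to a smooth function `F` with quadratic decay,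
where `ΛG(x)` is computed as the principal value `(1/π) pv ∫ (G(y)-G(x))/(y-x)² dy`
for `x ≠ 0`. -/
theorem exists_approximate_greens_function :
    ∃ (G F : ℝ → ℝ) (C : ℝ),
      (∀ x : ℝ, G (-x) = G x) ∧
      ContDiffOn ℝ (⊤ : ℕ∞) G {(0 : ℝ)}ᶜ ∧
      (∀ x : ℝ, x ∉ Set.Icc (-1 : ℝ) 1 → G x = 0) ∧
      (∀ x : ℝ, 0 < |x| → |x| ≤ 1 / 2 → G x = (1 / Real.pi) * Real.log |x|) ∧
      ContDiff ℝ (⊤ : ℕ∞) F ∧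
      (∀ x : ℝ, x ≠ 0 →
        (∀ ε : ℝ, 0 < ε →
          IntegrableOn (fun y => (G y - G x) / (y - x) ^ 2) {y : ℝ | ε < |y - x|}) ∧
        Tendsto
          (fun ε : ℝ =>
            (1 / Real.pi) * ∫ y in {y : ℝ | ε < |y - x|}, (G y - G x) / (y - x) ^ 2)
          (nhdsWithin 0 (Set.Ioi 0)) (nhds (F x))) ∧
      (∀ x : ℝ,
        |F x| ≤ C / (1 + |x|) ^ 2 ∧ |deriv F x| ≤ C / (1 + |x|) ^ 2) := by
  let χ : ContDiffBump (0 : ℝ) := ⟨1 / 2, 1, one_half_pos, one_half_lt_one⟩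
  obtain ⟨C, hC⟩ := exists_abs_greenError_le χ
  refine ⟨approxGreen χ, greenError χ, C, approxGreen_neg χ, contDiffOn_approxGreen χ,
    fun x hx => approxGreen_of_le_abs χ ?_, fun x _ hx => approxGreen_of_abs_le χ hx,
    contDiff_greenError χ, fun x hx => ?_, hC⟩
  · exact (not_le.1 fun h => hx (abs_le.1 h)).le
  · have h := hasHalfLaplacianAt_approxGreen χ hx
    simpa only [smul_eq_mul, ← div_eq_inv_mul] using And.intro h.integrableOn h.tendsto
end

section
/- For each θ ∈ (0,1) there is a constant C < ∞ such that for all functions H₁, H₂: ℝ → ℝ that are continuous on ℝ, twice continuously differentiable on ℝ∖{0}, with ‖H₁‖_{1−θ;2} < ∞ and ‖H₂‖_{1−θ;2} < ∞, and every α ∈ ℝ with α ≠ 0, one has ∬_{ℝ²} |□H₁(α;y,z) · □H₂(α;y,z)| / (y² z²) dy dz ≤ C ‖H₁‖_{1−θ;2} ‖H₂‖_{1−θ;2} |α|^{−2θ}. -/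
open MeasureTheory

/-- The set whose supremum is the singular kernel norm `‖K‖_{ζ;m}`. -/
noncomputable def singSet (ζ : ℝ) (m : ℕ) (K : ℝ → ℝ) : Set ℝ :=
  {r | ∃ (k : ℕ) (x : ℝ), k ≤ m ∧ x ≠ 0 ∧
    r = |x| ^ ((k : ℝ) - ζ) * |iteratedDeriv k K x|}

/-- The singular kernel norm `‖K‖_{ζ;m} = sup_{0≤k≤m} sup_{x≠0} |x|^(k-ζ) |K^(k)(x)|`. -/
noncomputable def singNorm (ζ : ℝ) (m : ℕ) (K : ℝ → ℝ) : ℝ := sSup (singSet ζ m K)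

/-- The second-difference operator `□K(α;y,z) = K(α) - K(α-y) - K(α-z) + K(α-y-z)`. -/
def boxOp (K : ℝ → ℝ) (α y z : ℝ) : ℝ :=
  K α - K (α - y) - K (α - z) + K (α - y - z)

/-! By Cauchy–Schwarz it suffices to bound the `L²` norm of `□K(α;y,z) / (y z)` by a multiple of
`‖K‖_{ζ;2} |α|^(ζ-1)`, where `ζ = 1 - θ`. Rescaling reduces this to `α = 1`, where the square of the
quotient is dominated by `φ(y) φ(z)` for an integrable `φ`, up to a constant times `‖K‖²`.

If `y` and `z` are both small, `□K(1;y,z)` stays away from the singularity of `K` and is `O(|y z|)`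
by the mean value theorem applied twice. If both are large, the bound `|□K(1;y,z)| ≲ |z|^ζ`, which
follows from Hölder continuity of `K`, is multiplied by its twin `|□K(1;y,z)| ≲ |y|^ζ`. If only `z`
is small, `|□K(1;y,z)|` is controlled by two increments `|K w - K (w - z)|`. For `ζ ≤ 1/2` neither
the Hölder bound `|z|^ζ` for them, divided by `|z|`, is square integrable near `z = 0`, nor the
Lipschitz bound `|w|^(ζ-1) |z|` near `w = 0`; the geometric mean of the two bounds does both. -/

open scoped Pointwise

theorem iteratedDeriv_comp_const_mul_field {𝕜 F : Type*} [NontriviallyNormedField 𝕜]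
    [NormedAddCommGroup F] [NormedSpace 𝕜 F] (n : ℕ) (f : 𝕜 → F) (c : 𝕜) :
    iteratedDeriv n (fun x => f (c * x)) = fun x => c ^ n • iteratedDeriv n f (c * x) := by
  induction n with
  | zero => simp
  | succ n ih =>
    ext x
    rw [iteratedDeriv_succ, ih, deriv_fun_const_smul_field,
      deriv_comp_mul_left c (iteratedDeriv n f), iteratedDeriv_succ, smul_smul, pow_succ]

theorem eLpNorm_two_sq_eq_lintegral_ofReal_sq {X : Type*} [MeasurableSpace X] (f : X → ℝ)
    (μ : Measure X) : eLpNorm f 2 μ ^ 2 = ∫⁻ x, ENNReal.ofReal (f x ^ 2) ∂μ := by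
  have henorm (x : X) : ENNReal.ofReal (f x ^ 2) = ‖f x‖ₑ ^ (2 : ℝ) := by
    rw [ENNReal.rpow_two, Real.enorm_eq_ofReal_abs, ← ENNReal.ofReal_pow (abs_nonneg _), sq_abs]
  simp_rw [henorm]
  simpa using eLpNorm_nnreal_pow_eq_lintegral (μ := μ) (f := f) (p := 2) two_ne_zero

theorem lintegral_ofReal_mul_prod {X Y : Type*} [MeasurableSpace X] [MeasurableSpace Y]
    {μ : Measure X} {ν : Measure Y} [SFinite μ] [SFinite ν] {f : X → ℝ} {g : Y → ℝ}
    (hf : Integrable f μ) (hg : Integrable g ν) (hf₀ : ∀ x, 0 ≤ f x) (hg₀ : ∀ y, 0 ≤ g y) :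
    ∫⁻ p, ENNReal.ofReal (f p.1 * g p.2) ∂μ.prod ν =
      ENNReal.ofReal ((∫ x, f x ∂μ) * ∫ y, g y ∂ν) := by
  rw [← integral_prod_mul, ofReal_integral_eq_lintegral_ofReal (hf.mul_prod hg)
    (.of_forall fun p => mul_nonneg (hf₀ p.1) (hg₀ p.2))]

theorem lintegral_abs_mul_le_eLpNorm_two {X : Type*} [MeasurableSpace X] {μ : Measure X}
    {f g : X → ℝ} (hf : AEStronglyMeasurable f μ) (hg : AEStronglyMeasurable g μ) :
    ∫⁻ x, ENNReal.ofReal |f x * g x| ∂μ ≤ eLpNorm f 2 μ * eLpNorm g 2 μ := by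
  have := eLpNorm_smul_le_mul_eLpNorm (p := 2) (q := 2) (r := 1) hg hf
  simpa only [eLpNorm_one_eq_lintegral_enorm, smul_eq_mul, Pi.mul_apply, Real.enorm_eq_ofReal_abs]
    using this

theorem singSet_comp_const_mul {a : ℝ} (ha : a ≠ 0) (ζ : ℝ) (m : ℕ) (K : ℝ → ℝ) :
    singSet ζ m (fun x => K (a * x)) = |a| ^ ζ • singSet ζ m K := by
  have ha' : 0 < |a| := abs_pos.2 ha
  have hscale (k : ℕ) (x : ℝ) :
      |x| ^ ((k : ℝ) - ζ) * |iteratedDeriv k (fun x => K (a * x)) x| =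
        |a| ^ ζ * (|a * x| ^ ((k : ℝ) - ζ) * |iteratedDeriv k K (a * x)|) := by
    simp only [iteratedDeriv_comp_const_mul_field, smul_eq_mul, abs_mul, abs_pow]
    rw [Real.mul_rpow ha'.le (abs_nonneg x), Real.rpow_sub ha', Real.rpow_natCast]
    field_simp
  ext r
  simp only [singSet, Set.mem_smul_set, Set.mem_ofPred_eq, smul_eq_mul, hscale]
  constructor
  · rintro ⟨k, x, hk, hx, rfl⟩
    exact ⟨_, ⟨k, a * x, hk, mul_ne_zero ha hx, rfl⟩, rfl⟩
  · rintro ⟨_, ⟨k, x, hk, hx, rfl⟩, rfl⟩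
    exact ⟨k, a⁻¹ * x, hk, by simp [ha, hx], by rw [mul_inv_cancel_left₀ ha]⟩

theorem singNorm_comp_const_mul {a : ℝ} (ha : a ≠ 0) (ζ : ℝ) (m : ℕ) (K : ℝ → ℝ) :
    singNorm ζ m (fun x => K (a * x)) = |a| ^ ζ * singNorm ζ m K := by
  rw [singNorm, singSet_comp_const_mul ha, Real.sSup_smul_of_nonneg (by positivity), smul_eq_mul,
    singNorm]

theorem singNorm_nonneg (ζ : ℝ) (m : ℕ) (K : ℝ → ℝ) : 0 ≤ singNorm ζ m K := by
  apply Real.sSup_nonneg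
  rintro _ ⟨k, x, -, -, rfl⟩
  positivity

theorem boxOp_eq_sub (K : ℝ → ℝ) (α y z : ℝ) :
    boxOp K α y z = (K α - K (α - z)) - (K (α - y) - K (α - y - z)) := by
  rw [boxOp]; ring

theorem boxOp_comm (K : ℝ → ℝ) (α y z : ℝ) : boxOp K α y z = boxOp K α z y := by
  rw [boxOp, boxOp, sub_right_comm α]; ring

theorem boxOp_comp_const_mul {a : ℝ} (ha : a ≠ 0) (K : ℝ → ℝ) (y z : ℝ) :
    boxOp (fun x => K (a * x)) 1 (y / a) (z / a) = boxOp K a y z := by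
  simp only [boxOp, mul_sub, mul_one, mul_div_cancel₀ _ ha]

theorem abs_boxOp_le_of_hasDerivAt {f f' f'' : ℝ → ℝ} {s : Set ℝ} {C α y z : ℝ}
    (hs : Convex ℝ s) (hf : ∀ x ∈ s, HasDerivAt f (f' x) x)
    (hf' : ∀ x ∈ s, HasDerivAt f' (f'' x) x) (hC : ∀ x ∈ s, |f'' x| ≤ C) (hα : α ∈ s)
    (hy : α - y ∈ s) (hz : α - z ∈ s) (hyz : α - y - z ∈ s) :
    |boxOp f α y z| ≤ C * |y| * |z| := by
  have hseg : ∀ x ∈ segment ℝ (α - y) α, x ∈ s ∧ x - z ∈ s := by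
    intro x hx
    refine ⟨hs.segment_subset hy hα hx, hs.segment_subset hyz hz ?_⟩
    simpa only [sub_eq_add_neg, add_comm _ (-z)] using
      (mem_segment_translate ℝ (-z)).2 hx
  have hdiff : ∀ x ∈ segment ℝ (α - y) α, ‖f' x - f' (x - z)‖ ≤ C * |z| := by
    intro x hx
    simpa using hs.norm_image_sub_le_of_norm_hasDerivWithin_le
      (fun t ht => (hf' t ht).hasDerivWithinAt) hC (hseg x hx).2 (hseg x hx).1
  have hmv := (convex_segment (α - y) α).norm_image_sub_le_of_norm_hasDerivWithin_le
    (f := fun x => f x - f (x - z)) (fun x hx => ((hf x (hseg x hx).1).sub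
      ((hf (x - z) (hseg x hx).2).comp_sub_const x z)).hasDerivWithinAt)
    hdiff (left_mem_segment ℝ _ _) (right_mem_segment ℝ _ _)
  rw [boxOp_eq_sub, mul_right_comm]
  simpa using hmv

/-- The kernels for which `‖K‖_{ζ;m}` is a meaningful bound: `K` is `m` times differentiable away
from the origin and the supremum defining `‖K‖_{ζ;m}` is finite. -/
structure IsSingularKernel (ζ : ℝ) (m : ℕ) (K : ℝ → ℝ) : Prop where
  differentiableOn_iteratedDeriv : ∀ k < m, DifferentiableOn ℝ (iteratedDeriv k K) {0}ᶜ
  bddAbove_singSet : BddAbove (singSet ζ m K)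

namespace IsSingularKernel

variable {ζ : ℝ} {m : ℕ} {K : ℝ → ℝ}

theorem of_contDiffOn (hK : ContDiffOn ℝ m K {0}ᶜ) (hb : BddAbove (singSet ζ m K)) :
    IsSingularKernel ζ m K := by
  have hopen : IsOpen ({0}ᶜ : Set ℝ) := isOpen_compl_singleton
  refine ⟨fun k hk => ?_, hb⟩
  exact (hK.differentiableOn_iteratedDerivWithin (mod_cast hk) hopen.uniqueDiffOn).congr
    fun x hx => (iteratedDerivWithin_of_isOpen hopen hx).symm

theorem hasDerivAt_iteratedDeriv (hK : IsSingularKernel ζ m K) {k : ℕ} (hk : k < m) {x : ℝ}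
    (hx : x ≠ 0) : HasDerivAt (iteratedDeriv k K) (iteratedDeriv (k + 1) K x) x := by
  rw [iteratedDeriv_succ]
  exact ((hK.differentiableOn_iteratedDeriv k hk).differentiableAt
    (isOpen_compl_singleton.mem_nhds hx)).hasDerivAt

theorem hasDerivAt (hK : IsSingularKernel ζ m K) (hm : 0 < m) {x : ℝ} (hx : x ≠ 0) :
    HasDerivAt K (iteratedDeriv 1 K x) x := by
  simpa only [iteratedDeriv_zero] using hK.hasDerivAt_iteratedDeriv hm hx

theorem measurable (hK : IsSingularKernel ζ m K) (hm : 0 < m) : Measurable K :=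
  measurable_of_continuousOn_compl_singleton 0 fun _ hx =>
    (hK.hasDerivAt hm hx).continuousAt.continuousWithinAt

theorem abs_iteratedDeriv_le (hK : IsSingularKernel ζ m K) {k : ℕ} (hk : k ≤ m) {x : ℝ}
    (hx : x ≠ 0) : |iteratedDeriv k K x| ≤ singNorm ζ m K * |x| ^ (ζ - k) := by
  have hx' : 0 < |x| := abs_pos.2 hx
  have hle : |x| ^ ((k : ℝ) - ζ) * |iteratedDeriv k K x| ≤ singNorm ζ m K :=
    le_csSup hK.bddAbove_singSet ⟨k, x, hk, hx, rfl⟩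
  rwa [← neg_sub (k : ℝ), Real.rpow_neg hx'.le, ← div_eq_mul_inv, le_div_iff₀' (by positivity)]

theorem abs_apply_le (hK : IsSingularKernel ζ m K) {x : ℝ} (hx : x ≠ 0) :
    |K x| ≤ singNorm ζ m K * |x| ^ ζ := by
  simpa using hK.abs_iteratedDeriv_le (Nat.zero_le m) hx

theorem comp_const_mul (hK : IsSingularKernel ζ m K) {a : ℝ} (ha : a ≠ 0) :
    IsSingularKernel ζ m (fun x => K (a * x)) where
  differentiableOn_iteratedDeriv k hk := by
    rw [iteratedDeriv_comp_const_mul_field]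
    have hcomp : DifferentiableOn ℝ (fun x => iteratedDeriv k K (a * x)) {0}ᶜ :=
      (hK.differentiableOn_iteratedDeriv k hk).comp (differentiableOn_id.const_mul a)
        fun x hx => mul_ne_zero ha hx
    exact hcomp.const_smul (a ^ k)
  bddAbove_singSet := by
    rw [singSet_comp_const_mul ha]
    exact hK.bddAbove_singSet.smul_of_nonneg (by positivity)

theorem abs_sub_le_of_abs_le (hK : IsSingularKernel ζ m K) (hm : 0 < m) (hζ : ζ ≤ 1) {w z : ℝ}
    (hw : w ≠ 0) (hz : |z| ≤ |w| / 2) :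
    |K w - K (w - z)| ≤ singNorm ζ m K * ((|w| / 2) ^ (ζ - 1) * |z|) := by
  have hw' : 0 < |w| / 2 := by positivity
  have hfar : ∀ x ∈ Set.uIcc (w - z) w, |w| / 2 ≤ |x| := by
    intro x hx
    have hdist : |w - x| ≤ |z| := by simpa using Set.abs_sub_right_of_mem_uIcc hx
    linarith [abs_sub_abs_le_abs_sub w x]
  have hderiv : ∀ x ∈ Set.uIcc (w - z) w,
      ‖iteratedDeriv 1 K x‖ ≤ singNorm ζ m K * (|w| / 2) ^ (ζ - 1) := by
    intro x hx
    calc |iteratedDeriv 1 K x| ≤ singNorm ζ m K * |x| ^ (ζ - 1) := by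
          simpa using hK.abs_iteratedDeriv_le hm (abs_pos.1 (hw'.trans_le (hfar x hx)))
      _ ≤ singNorm ζ m K * (|w| / 2) ^ (ζ - 1) :=
          mul_le_mul_of_nonneg_left
            (Real.rpow_le_rpow_of_nonpos hw' (hfar x hx) (by linarith)) (singNorm_nonneg ζ m K)
  have hmv := (convex_uIcc (w - z) w).norm_image_sub_le_of_norm_hasDerivWithin_le
    (fun x hx => (hK.hasDerivAt hm (abs_pos.1 (hw'.trans_le (hfar x hx)))).hasDerivWithinAt)
    hderiv Set.left_mem_uIcc Set.right_mem_uIcc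
  simpa [mul_assoc] using hmv

theorem abs_sub_le_of_le_abs (hK : IsSingularKernel ζ m K) (hζ₀ : 0 ≤ ζ) (hζ₁ : ζ ≤ 1) {w z : ℝ}
    (hw : w ≠ 0) (hwz : w ≠ z) (hz : |w| / 2 ≤ |z|) :
    |K w - K (w - z)| ≤ 5 * singNorm ζ m K * |z| ^ ζ := by
  have hN := singNorm_nonneg ζ m K
  have hgrow {c x : ℝ} (hc : 1 ≤ c) (hx : x ≠ 0) (hxz : |x| ≤ c * |z|) :
      |K x| ≤ singNorm ζ m K * (c * |z| ^ ζ) := by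
    refine (hK.abs_apply_le hx).trans (mul_le_mul_of_nonneg_left ?_ hN)
    calc |x| ^ ζ ≤ (c * |z|) ^ ζ := Real.rpow_le_rpow (abs_nonneg x) hxz hζ₀
      _ = c ^ ζ * |z| ^ ζ := Real.mul_rpow (by positivity) (abs_nonneg z)
      _ ≤ c * |z| ^ ζ := by gcongr; exact Real.rpow_le_self_of_one_le hc hζ₁
  calc |K w - K (w - z)| ≤ |K w| + |K (w - z)| := abs_sub _ _
    _ ≤ singNorm ζ m K * (2 * |z| ^ ζ) + singNorm ζ m K * (3 * |z| ^ ζ) :=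
        add_le_add (hgrow one_le_two hw (by linarith))
          (hgrow (by norm_num) (sub_ne_zero.2 hwz) (by linarith [abs_sub w z]))
    _ = 5 * singNorm ζ m K * |z| ^ ζ := by ring

theorem abs_sub_le_max (hK : IsSingularKernel ζ m K) (hm : 0 < m) (hζ₀ : 0 ≤ ζ) (hζ₁ : ζ ≤ 1)
    {w z : ℝ} (hw : w ≠ 0) (hwz : w ≠ z) :
    |K w - K (w - z)| ≤ 5 * singNorm ζ m K * (max (|w| / 2) |z| ^ (ζ - 1) * |z|) := by
  have hN := singNorm_nonneg ζ m K
  rcases le_total |z| (|w| / 2) with hz | hz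
  · rw [max_eq_left hz, mul_assoc]
    exact (hK.abs_sub_le_of_abs_le hm hζ₁ hw hz).trans
      (le_mul_of_one_le_left (by positivity) (by norm_num))
  · have hz' : |z| ≠ 0 := by
      have := abs_pos.2 hw
      linarith
    rw [max_eq_right hz, ← Real.rpow_add_one hz', sub_add_cancel]
    exact hK.abs_sub_le_of_le_abs hζ₀ hζ₁ hw hwz hz

theorem abs_sub_le_rpow (hK : IsSingularKernel ζ m K) (hm : 0 < m) (hζ₀ : 0 ≤ ζ) (hζ₁ : ζ ≤ 1)
    {w z : ℝ} (hw : w ≠ 0) (hwz : w ≠ z) (hz : z ≠ 0) :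
    |K w - K (w - z)| ≤ 5 * singNorm ζ m K * |z| ^ ζ := by
  have hN := singNorm_nonneg ζ m K
  have hz' := abs_pos.2 hz
  calc |K w - K (w - z)| ≤ 5 * singNorm ζ m K * (max (|w| / 2) |z| ^ (ζ - 1) * |z|) :=
        hK.abs_sub_le_max hm hζ₀ hζ₁ hw hwz
    _ ≤ 5 * singNorm ζ m K * (|z| ^ (ζ - 1) * |z|) := by
        gcongr ?_ * (?_ * ?_)
        exact Real.rpow_le_rpow_of_nonpos hz' (le_max_right _ _) (by linarith)
    _ = 5 * singNorm ζ m K * |z| ^ ζ := by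
        rw [← Real.rpow_add_one hz'.ne', sub_add_cancel]

theorem abs_sub_le_mul_rpow (hK : IsSingularKernel ζ m K) (hm : 0 < m) (hζ₀ : 0 ≤ ζ) (hζ₁ : ζ ≤ 1)
    {w z : ℝ} (hw : w ≠ 0) (hwz : w ≠ z) :
    |K w - K (w - z)| ≤ 10 * singNorm ζ m K * (|w| ^ (ζ - 1) * |z|) := by
  have hN := singNorm_nonneg ζ m K
  have hw' := abs_pos.2 hw
  have hhalf : (2 : ℝ)⁻¹ ^ (ζ - 1) ≤ 2 := by
    rw [Real.inv_rpow zero_le_two, ← Real.rpow_neg zero_le_two]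
    exact Real.rpow_le_self_of_one_le one_le_two (by linarith)
  calc |K w - K (w - z)| ≤ 5 * singNorm ζ m K * (max (|w| / 2) |z| ^ (ζ - 1) * |z|) :=
        hK.abs_sub_le_max hm hζ₀ hζ₁ hw hwz
    _ ≤ 5 * singNorm ζ m K * ((|w| / 2) ^ (ζ - 1) * |z|) := by
        gcongr ?_ * (?_ * ?_)
        exact Real.rpow_le_rpow_of_nonpos (by positivity) (le_max_left _ _) (by linarith)
    _ = 5 * singNorm ζ m K * (|w| ^ (ζ - 1) * 2⁻¹ ^ (ζ - 1) * |z|) := by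
        rw [div_eq_mul_inv, Real.mul_rpow hw'.le (by norm_num)]
    _ ≤ 5 * singNorm ζ m K * (|w| ^ (ζ - 1) * 2 * |z|) := by gcongr
    _ = 10 * singNorm ζ m K * (|w| ^ (ζ - 1) * |z|) := by ring

/-- The geometric mean of the two preceding bounds: after division by `z ^ 2` it is locally
integrable in both variables for every `ζ > 0`, whereas each of their squares needs `ζ > 1 / 2`. -/
theorem sub_sq_le (hK : IsSingularKernel ζ m K) (hm : 0 < m) (hζ₀ : 0 ≤ ζ) (hζ₁ : ζ ≤ 1) {w z : ℝ}
    (hw : w ≠ 0) (hwz : w ≠ z) (hz : z ≠ 0) :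
    (K w - K (w - z)) ^ 2 ≤
      50 * singNorm ζ m K ^ 2 * (z ^ 2 * |z| ^ (ζ - 1) * |w| ^ (ζ - 1)) := by
  have hN := singNorm_nonneg ζ m K
  have hzζ : |z| ^ ζ = |z| ^ (ζ - 1) * |z| := by
    rw [← Real.rpow_add_one (abs_ne_zero.2 hz), sub_add_cancel]
  calc (K w - K (w - z)) ^ 2 = |K w - K (w - z)| * |K w - K (w - z)| := by
        rw [← sq, sq_abs]
    _ ≤ 5 * singNorm ζ m K * |z| ^ ζ * (10 * singNorm ζ m K * (|w| ^ (ζ - 1) * |z|)) :=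
        mul_le_mul (hK.abs_sub_le_rpow hm hζ₀ hζ₁ hw hwz hz)
          (hK.abs_sub_le_mul_rpow hm hζ₀ hζ₁ hw hwz) (abs_nonneg _) (by positivity)
    _ = 50 * singNorm ζ m K ^ 2 * (z ^ 2 * |z| ^ (ζ - 1) * |w| ^ (ζ - 1)) := by
        rw [hzζ, ← sq_abs z]; ring

end IsSingularKernel

/-- An integrable weight on the line for `ζ ∈ (0, 1)`: it behaves like `|t| ^ (ζ - 1)` at the origin
and like `|t| ^ (ζ - 2)` at infinity. -/
noncomputable def decayWeight (ζ t : ℝ) : ℝ := |t| ^ (ζ - 1) / (1 + |t|)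

theorem decayWeight_nonneg (ζ t : ℝ) : 0 ≤ decayWeight ζ t := by
  unfold decayWeight; positivity

theorem integrable_decayWeight {ζ : ℝ} (hζ : ζ ∈ Set.Ioo 0 1) : Integrable (decayWeight ζ) := by
  have hmeas (s : Set ℝ) :
      AEStronglyMeasurable (fun t : ℝ => t ^ (ζ - 1) / (1 + t)) (volume.restrict s) := by
    have : Measurable fun t : ℝ => t ^ (ζ - 1) / (1 + t) := by fun_prop
    exact this.aestronglyMeasurable
  have hzero : IntegrableOn (fun t : ℝ => t ^ (ζ - 1) / (1 + t)) (Set.Ioc 0 1) := by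
    have hpow : IntegrableOn (fun t : ℝ => t ^ (ζ - 1)) (Set.Ioc 0 1) :=
      (intervalIntegrable_iff_integrableOn_Ioc_of_le zero_le_one).1
        (intervalIntegral.intervalIntegrable_rpow' (by linarith [hζ.1]))
    refine hpow.mono' (hmeas _) ((ae_restrict_mem measurableSet_Ioc).mono fun t ht => ?_)
    have ht₀ : 0 < t := ht.1
    rw [Real.norm_of_nonneg (by positivity)]
    exact div_le_self (by positivity) (by linarith)
  have hinfty : IntegrableOn (fun t : ℝ => t ^ (ζ - 1) / (1 + t)) (Set.Ioi 1) := by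
    have hpow : IntegrableOn (fun t : ℝ => t ^ (ζ - 1 - 1)) (Set.Ioi 1) :=
      integrableOn_Ioi_rpow_of_lt (by linarith [hζ.2]) one_pos
    refine hpow.mono' (hmeas _) ((ae_restrict_mem measurableSet_Ioi).mono fun t ht => ?_)
    have ht₀ : 0 < t := one_pos.trans ht
    rw [Real.norm_of_nonneg (by positivity), Real.rpow_sub_one ht₀.ne' (ζ - 1)]
    gcongr
    linarith
  have hIoi : IntegrableOn (fun t : ℝ => t ^ (ζ - 1) / (1 + t)) (Set.Ioi 0) := by
    rw [← Set.Ioc_union_Ioi_eq_Ioi zero_le_one]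
    exact hzero.union hinfty
  refine (integrable_fun_norm_addHaar volume (f := fun t : ℝ => t ^ (ζ - 1) / (1 + t))).2 ?_
  simpa using hIoi

/-- The one-variable factor of the product that dominates `(□K(1;y,z) / (y z)) ^ 2`. It is singular
where the increment vanishes, at `t = 0`, and where `1 - t` meets the singularity of `K`, at
`t = 1`. -/
noncomputable def boxMajorant (ζ t : ℝ) : ℝ := decayWeight ζ t + decayWeight ζ (1 - t)

theorem boxMajorant_nonneg (ζ t : ℝ) : 0 ≤ boxMajorant ζ t :=
  add_nonneg (decayWeight_nonneg ζ t) (decayWeight_nonneg ζ (1 - t))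

theorem integrable_boxMajorant {ζ : ℝ} (hζ : ζ ∈ Set.Ioo 0 1) : Integrable (boxMajorant ζ) :=
  (integrable_decayWeight hζ).add ((integrable_decayWeight hζ).comp_sub_left 1)

theorem rpow_sub_one_le_boxMajorant (ζ : ℝ) {t : ℝ} (ht : |t| ≤ 1) :
    |t| ^ (ζ - 1) ≤ 2 * boxMajorant ζ t := by
  have hweight : |t| ^ (ζ - 1) ≤ 2 * decayWeight ζ t := by
    rw [decayWeight, mul_div_assoc', le_div_iff₀' (by positivity)]
    gcongr
    linarith
  rw [boxMajorant]
  linarith [decayWeight_nonneg ζ (1 - t)]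

theorem one_le_boxMajorant {ζ t : ℝ} (hζ : ζ ≤ 1) (ht₀ : t ≠ 0) (ht : |t| ≤ 1) :
    1 ≤ 2 * boxMajorant ζ t :=
  (Real.one_le_rpow_of_pos_of_le_one_of_nonpos (abs_pos.2 ht₀) ht (by linarith)).trans
    (rpow_sub_one_le_boxMajorant ζ ht)

theorem rpow_le_sq_mul_decayWeight (ζ : ℝ) {t : ℝ} (ht : 1 / 4 ≤ |t|) :
    |t| ^ ζ ≤ 5 * (t ^ 2 * decayWeight ζ t) := by
  have ht' : 0 < |t| := by linarith
  rw [decayWeight, Real.rpow_sub_one ht'.ne', ← sq_abs t]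
  field_simp
  linarith

theorem rpow_le_sq_mul_boxMajorant (ζ : ℝ) {t : ℝ} (ht : 1 / 4 ≤ |t|) :
    |t| ^ ζ ≤ 5 * (t ^ 2 * boxMajorant ζ t) := by
  refine (rpow_le_sq_mul_decayWeight ζ ht).trans ?_
  gcongr
  exact le_add_of_nonneg_right (decayWeight_nonneg ζ (1 - t))

theorem one_add_rpow_le_sq_mul_boxMajorant {ζ t : ℝ} (hζ₀ : 0 ≤ ζ) (hζ₁ : ζ ≤ 1)
    (ht : 1 / 4 ≤ |t|) : 1 + |1 - t| ^ (ζ - 1) ≤ 36 * (t ^ 2 * boxMajorant ζ t) := by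
  have hzero : 1 ≤ 20 * (t ^ 2 * decayWeight ζ t) := by
    have hquarter : 1 / 4 ≤ |t| ^ ζ :=
      (Real.self_le_rpow_of_le_one (by norm_num) (by norm_num) hζ₁).trans
        (Real.rpow_le_rpow (by norm_num) ht hζ₀)
    linarith [rpow_le_sq_mul_decayWeight ζ ht]
  have hone : |1 - t| ^ (ζ - 1) ≤ 36 * (t ^ 2 * decayWeight ζ (1 - t)) := by
    have hquad : 1 + |1 - t| ≤ 36 * t ^ 2 := by
      have htri : |1 - t| ≤ 1 + |t| := by simpa using abs_sub 1 t
      nlinarith [sq_abs t]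
    rw [decayWeight, ← mul_div_assoc, ← mul_div_assoc, le_div_iff₀ (by positivity), ← mul_assoc,
      mul_comm]
    gcongr
  rw [boxMajorant]
  linarith

namespace IsSingularKernel

variable {ζ : ℝ} {m : ℕ} {K : ℝ → ℝ}

theorem abs_boxOp_one_le (hK : IsSingularKernel ζ m K) (hm : 1 < m) (hζ₀ : 0 ≤ ζ) (hζ₁ : ζ ≤ 2)
    {u v : ℝ} (hu : |u| ≤ 1 / 4) (hv : |v| ≤ 1 / 4) :
    |boxOp K 1 u v| ≤ 4 * singNorm ζ m K * |u| * |v| := by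
  have hpos {x : ℝ} (hx : x ∈ Set.Ici (1 / 2 : ℝ)) : 0 < x := one_half_pos.trans_le hx
  have hsnd : ∀ x ∈ Set.Ici (1 / 2 : ℝ), |iteratedDeriv 2 K x| ≤ 4 * singNorm ζ m K := by
    intro x hx
    calc |iteratedDeriv 2 K x| ≤ singNorm ζ m K * |x| ^ (ζ - 2) :=
          mod_cast hK.abs_iteratedDeriv_le hm (hpos hx).ne'
      _ ≤ singNorm ζ m K * 4 := by
          refine mul_le_mul_of_nonneg_left ?_ (singNorm_nonneg ζ m K)
          calc |x| ^ (ζ - 2) = x ^ (ζ - 2) := by rw [abs_of_pos (hpos hx)]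
            _ ≤ (1 / 2) ^ (ζ - 2) :=
                Real.rpow_le_rpow_of_nonpos one_half_pos hx (by linarith)
            _ ≤ (1 / 2) ^ (-2 : ℝ) :=
                Real.rpow_le_rpow_of_exponent_ge one_half_pos (by norm_num) (by linarith)
            _ = 4 := by rw [Real.rpow_neg (by norm_num)]; norm_num
      _ = 4 * singNorm ζ m K := mul_comm _ _
  have := (abs_le.1 hu).2
  have := (abs_le.1 hv).2
  apply abs_boxOp_le_of_hasDerivAt (convex_Ici (1 / 2 : ℝ))
    (fun x hx => hK.hasDerivAt (by lia) (hpos hx).ne')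
    (fun x hx => hK.hasDerivAt_iteratedDeriv hm (hpos hx).ne') hsnd <;>
  · rw [Set.mem_Ici]
    linarith

theorem boxOp_one_sq_le_of_small (hK : IsSingularKernel ζ m K) (hm : 1 < m) (hζ₀ : 0 ≤ ζ)
    (hζ₁ : ζ ≤ 1) {u v : ℝ} (hu₀ : u ≠ 0) (hv₀ : v ≠ 0) (hu : |u| ≤ 1 / 4) (hv : |v| ≤ 1 / 4) :
    boxOp K 1 u v ^ 2 ≤
      (100 * singNorm ζ m K * (u * v)) ^ 2 * (boxMajorant ζ u * boxMajorant ζ v) := by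
  have hφu : 1 ≤ 2 * boxMajorant ζ u := one_le_boxMajorant hζ₁ hu₀ (by linarith)
  have hφv : 1 ≤ 2 * boxMajorant ζ v := one_le_boxMajorant hζ₁ hv₀ (by linarith)
  have hφ : 1 ≤ 4 * (boxMajorant ζ u * boxMajorant ζ v) := by nlinarith
  calc boxOp K 1 u v ^ 2 = |boxOp K 1 u v| ^ 2 := (sq_abs _).symm
    _ ≤ (4 * singNorm ζ m K * |u| * |v|) ^ 2 := by
        gcongr
        exact hK.abs_boxOp_one_le hm hζ₀ (by linarith) hu hv
    _ = (4 * singNorm ζ m K * (u * v)) ^ 2 * 1 := by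
        simp only [mul_pow, sq_abs]; ring
    _ ≤ (4 * singNorm ζ m K * (u * v)) ^ 2 * (4 * (boxMajorant ζ u * boxMajorant ζ v)) := by
        gcongr
    _ = (8 * (singNorm ζ m K * (u * v))) ^ 2 * (boxMajorant ζ u * boxMajorant ζ v) := by ring
    _ ≤ _ := by
      rw [mul_assoc 100, mul_pow, mul_pow 100]
      have := boxMajorant_nonneg ζ u
      have := boxMajorant_nonneg ζ v
      gcongr
      norm_num

theorem boxOp_one_sq_le_of_mixed (hK : IsSingularKernel ζ m K) (hm : 0 < m) (hζ₀ : 0 ≤ ζ)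
    (hζ₁ : ζ ≤ 1) {u v : ℝ} (hv₀ : v ≠ 0) (hu₁ : u ≠ 1) (hv₁ : v ≠ 1) (huv : u + v ≠ 1)
    (hu : 1 / 4 ≤ |u|) (hv : |v| ≤ 1 / 4) :
    boxOp K 1 u v ^ 2 ≤
      (100 * singNorm ζ m K * (u * v)) ^ 2 * (boxMajorant ζ u * boxMajorant ζ v) := by
  have hφu := boxMajorant_nonneg ζ u
  have hφv := boxMajorant_nonneg ζ v
  have hone := hK.sub_sq_le hm hζ₀ hζ₁ one_ne_zero hv₁.symm hv₀
  rw [abs_one, Real.one_rpow, mul_one] at hone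
  have hshift := hK.sub_sq_le hm hζ₀ hζ₁ (sub_ne_zero.2 hu₁.symm)
    (fun h => huv (by linarith)) hv₀ (w := 1 - u)
  calc boxOp K 1 u v ^ 2 ≤ 2 * ((K 1 - K (1 - v)) ^ 2 + (K (1 - u) - K (1 - u - v)) ^ 2) := by
        rw [boxOp_eq_sub]
        nlinarith [sq_nonneg (K 1 - K (1 - v) + (K (1 - u) - K (1 - u - v)))]
    _ ≤ 100 * singNorm ζ m K ^ 2 * (v ^ 2 * |v| ^ (ζ - 1) * (1 + |1 - u| ^ (ζ - 1))) := by
        linarith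
    _ ≤ 100 * singNorm ζ m K ^ 2 *
          (v ^ 2 * (2 * boxMajorant ζ v) * (36 * (u ^ 2 * boxMajorant ζ u))) := by
        gcongr
        · exact rpow_sub_one_le_boxMajorant ζ (by linarith)
        · exact one_add_rpow_le_sq_mul_boxMajorant hζ₀ hζ₁ hu
    _ = 7200 * ((singNorm ζ m K * (u * v)) ^ 2 * (boxMajorant ζ u * boxMajorant ζ v)) := by ring
    _ ≤ 100 ^ 2 * ((singNorm ζ m K * (u * v)) ^ 2 * (boxMajorant ζ u * boxMajorant ζ v)) := by
        gcongr
        norm_num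
    _ = _ := by ring

theorem abs_boxOp_one_le_rpow (hK : IsSingularKernel ζ m K) (hm : 0 < m) (hζ₀ : 0 ≤ ζ)
    (hζ₁ : ζ ≤ 1) {u v : ℝ} (hv₀ : v ≠ 0) (hu₁ : u ≠ 1) (hv₁ : v ≠ 1) (huv : u + v ≠ 1) :
    |boxOp K 1 u v| ≤ 10 * singNorm ζ m K * |v| ^ ζ := by
  have hone := hK.abs_sub_le_rpow hm hζ₀ hζ₁ one_ne_zero hv₁.symm hv₀
  have hshift := hK.abs_sub_le_rpow hm hζ₀ hζ₁ (sub_ne_zero.2 hu₁.symm)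
    (fun h => huv (by linarith)) hv₀ (w := 1 - u)
  rw [boxOp_eq_sub]
  linarith [abs_sub (K 1 - K (1 - v)) (K (1 - u) - K (1 - u - v))]

theorem boxOp_one_sq_le_of_large (hK : IsSingularKernel ζ m K) (hm : 0 < m) (hζ₀ : 0 ≤ ζ)
    (hζ₁ : ζ ≤ 1) {u v : ℝ} (hu₁ : u ≠ 1) (hv₁ : v ≠ 1) (huv : u + v ≠ 1)
    (hu : 1 / 4 ≤ |u|) (hv : 1 / 4 ≤ |v|) :
    boxOp K 1 u v ^ 2 ≤
      (100 * singNorm ζ m K * (u * v)) ^ 2 * (boxMajorant ζ u * boxMajorant ζ v) := by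
  have hN := singNorm_nonneg ζ m K
  have hφu := boxMajorant_nonneg ζ u
  have hφv := boxMajorant_nonneg ζ v
  have hu₀ : u ≠ 0 := abs_pos.1 (by linarith)
  have hv₀ : v ≠ 0 := abs_pos.1 (by linarith)
  have hboxv := hK.abs_boxOp_one_le_rpow hm hζ₀ hζ₁ hv₀ hu₁ hv₁ huv
  have hboxu := hK.abs_boxOp_one_le_rpow hm hζ₀ hζ₁ hu₀ hv₁ hu₁ (by rwa [add_comm])
  rw [boxOp_comm] at hboxu
  calc boxOp K 1 u v ^ 2 = |boxOp K 1 u v| * |boxOp K 1 u v| := by rw [← sq, sq_abs]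
    _ ≤ 10 * singNorm ζ m K * |u| ^ ζ * (10 * singNorm ζ m K * |v| ^ ζ) :=
        mul_le_mul hboxu hboxv (abs_nonneg _) (by positivity)
    _ ≤ 10 * singNorm ζ m K * (5 * (u ^ 2 * boxMajorant ζ u)) *
          (10 * singNorm ζ m K * (5 * (v ^ 2 * boxMajorant ζ v))) := by
        gcongr
        · exact rpow_le_sq_mul_boxMajorant ζ hu
        · exact rpow_le_sq_mul_boxMajorant ζ hv
    _ = 2500 * ((singNorm ζ m K * (u * v)) ^ 2 * (boxMajorant ζ u * boxMajorant ζ v)) := by ring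
    _ ≤ 100 ^ 2 * ((singNorm ζ m K * (u * v)) ^ 2 * (boxMajorant ζ u * boxMajorant ζ v)) := by
        gcongr
        norm_num
    _ = _ := by ring

theorem boxOp_one_sq_le (hK : IsSingularKernel ζ m K) (hm : 1 < m) (hζ₀ : 0 ≤ ζ) (hζ₁ : ζ ≤ 1)
    {u v : ℝ} (hu₀ : u ≠ 0) (hv₀ : v ≠ 0) (hu₁ : u ≠ 1) (hv₁ : v ≠ 1) (huv : u + v ≠ 1) :
    boxOp K 1 u v ^ 2 ≤
      (100 * singNorm ζ m K * (u * v)) ^ 2 * (boxMajorant ζ u * boxMajorant ζ v) := by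
  have hm₀ : 0 < m := by lia
  rcases le_total |u| (1 / 4) with hu | hu <;> rcases le_total |v| (1 / 4) with hv | hv
  · exact hK.boxOp_one_sq_le_of_small hm hζ₀ hζ₁ hu₀ hv₀ hu hv
  · rw [boxOp_comm, mul_comm u, mul_comm (boxMajorant ζ u)]
    exact hK.boxOp_one_sq_le_of_mixed hm₀ hζ₀ hζ₁ hu₀ hv₁ hu₁ (by rwa [add_comm]) hv hu
  · exact hK.boxOp_one_sq_le_of_mixed hm₀ hζ₀ hζ₁ hv₀ hu₁ hv₁ huv hu hv
  · exact hK.boxOp_one_sq_le_of_large hm₀ hζ₀ hζ₁ hu₁ hv₁ huv hu hv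

theorem boxOp_div_sq_le (hK : IsSingularKernel ζ m K) (hm : 1 < m) (hζ₀ : 0 ≤ ζ) (hζ₁ : ζ ≤ 1)
    {α y z : ℝ} (hα : α ≠ 0) (hy₀ : y ≠ 0) (hz₀ : z ≠ 0) (hyα : y ≠ α) (hzα : z ≠ α)
    (hyz : y + z ≠ α) :
    (boxOp K α y z / (y * z)) ^ 2 ≤
      (100 * singNorm ζ m K * |α| ^ (ζ - 2)) ^ 2 *
        (boxMajorant ζ (y / α) * boxMajorant ζ (z / α)) := by
  have hone := (hK.comp_const_mul hα).boxOp_one_sq_le hm hζ₀ hζ₁ (div_ne_zero hy₀ hα)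
    (div_ne_zero hz₀ hα) (by rwa [ne_eq, div_eq_one_iff_eq hα])
    (by rwa [ne_eq, div_eq_one_iff_eq hα]) (by rwa [← add_div, ne_eq, div_eq_one_iff_eq hα])
  rw [boxOp_comp_const_mul hα, singNorm_comp_const_mul hα] at hone
  rw [div_pow, div_le_iff₀ (by positivity)]
  refine hone.trans_eq ?_
  rw [Real.rpow_sub (abs_pos.2 hα), Real.rpow_two, sq_abs]
  field_simp

theorem ae_boxOp_div_sq_le (hK : IsSingularKernel ζ m K) (hm : 1 < m) (hζ₀ : 0 ≤ ζ) (hζ₁ : ζ ≤ 1)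
    {α : ℝ} (hα : α ≠ 0) :
    ∀ᵐ p : ℝ × ℝ, (boxOp K α p.1 p.2 / (p.1 * p.2)) ^ 2 ≤
      (100 * singNorm ζ m K * |α| ^ (ζ - 2)) ^ 2 *
        (boxMajorant ζ (p.1 / α) * boxMajorant ζ (p.2 / α)) := by
  have hne (a : ℝ) : ∀ᵐ x : ℝ, x ≠ a := Measure.ae_ne volume a
  have hfst (a : ℝ) : ∀ᵐ p : ℝ × ℝ, p.1 ≠ a := Measure.quasiMeasurePreserving_fst.ae (hne a)
  have hsnd (a : ℝ) : ∀ᵐ p : ℝ × ℝ, p.2 ≠ a := Measure.quasiMeasurePreserving_snd.ae (hne a)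
  have hadd : ∀ᵐ p : ℝ × ℝ, p.1 + p.2 ≠ α :=
    (quasiMeasurePreserving_add volume volume).ae (hne α)
  filter_upwards [hfst 0, hsnd 0, hfst α, hsnd α, hadd] with p hy₀ hz₀ hyα hzα hyz
  exact hK.boxOp_div_sq_le hm hζ₀ hζ₁ hα hy₀ hz₀ hyα hzα hyz

theorem measurable_boxOp_div (hK : IsSingularKernel ζ m K) (hm : 0 < m) (α : ℝ) :
    Measurable fun p : ℝ × ℝ => boxOp K α p.1 p.2 / (p.1 * p.2) := by
  have := hK.measurable hm
  unfold boxOp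
  fun_prop

theorem eLpNorm_boxOp_div_le (hK : IsSingularKernel ζ m K) (hm : 1 < m) (hζ : ζ ∈ Set.Ioo 0 1)
    {α : ℝ} (hα : α ≠ 0) :
    eLpNorm (fun p : ℝ × ℝ => boxOp K α p.1 p.2 / (p.1 * p.2)) 2 ≤
      ENNReal.ofReal (100 * (∫ t, boxMajorant ζ t) * singNorm ζ m K * |α| ^ (ζ - 1)) := by
  have hN := singNorm_nonneg ζ m K
  have hI : 0 ≤ ∫ t, boxMajorant ζ t := integral_nonneg (boxMajorant_nonneg ζ)
  have hαpow : |α| ^ (ζ - 1) = |α| ^ (ζ - 2) * |α| := by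
    rw [← Real.rpow_add_one (abs_ne_zero.2 hα), sub_add, ← one_add_one_eq_two, add_sub_cancel_right]
  have hint : Integrable fun t => boxMajorant ζ (t / α) := (integrable_boxMajorant hζ).comp_div hα
  have hnonneg (t : ℝ) : 0 ≤ boxMajorant ζ (t / α) := boxMajorant_nonneg ζ (t / α)
  rw [← ENNReal.pow_le_pow_left_iff two_ne_zero, eLpNorm_two_sq_eq_lintegral_ofReal_sq]
  calc ∫⁻ p : ℝ × ℝ, ENNReal.ofReal ((boxOp K α p.1 p.2 / (p.1 * p.2)) ^ 2)
      ≤ ∫⁻ p : ℝ × ℝ, ENNReal.ofReal ((100 * singNorm ζ m K * |α| ^ (ζ - 2)) ^ 2 *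
          (boxMajorant ζ (p.1 / α) * boxMajorant ζ (p.2 / α))) :=
        lintegral_mono_ae ((hK.ae_boxOp_div_sq_le hm hζ.1.le hζ.2.le hα).mono
          fun p hp => ENNReal.ofReal_le_ofReal hp)
    _ = ENNReal.ofReal ((100 * singNorm ζ m K * |α| ^ (ζ - 2)) ^ 2) *
          ENNReal.ofReal ((∫ t, boxMajorant ζ (t / α)) * ∫ t, boxMajorant ζ (t / α)) := by
        simp_rw [ENNReal.ofReal_mul (sq_nonneg (100 * singNorm ζ m K * |α| ^ (ζ - 2)))]
        rw [lintegral_const_mul' _ _ ENNReal.ofReal_ne_top, Measure.volume_eq_prod,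
          lintegral_ofReal_mul_prod hint hint hnonneg hnonneg]
    _ = ENNReal.ofReal (100 * (∫ t, boxMajorant ζ t) * singNorm ζ m K * |α| ^ (ζ - 1)) ^ 2 := by
        rw [Measure.integral_comp_div, smul_eq_mul, ← ENNReal.ofReal_mul (sq_nonneg _),
          ← ENNReal.ofReal_pow (by positivity), hαpow]
        congr 1
        ring

end IsSingularKernel

theorem boxOp_double_integral_bound_general {ζ₁ ζ₂ : ℝ} (hζ₁ : ζ₁ ∈ Set.Ioo (0 : ℝ) 1)
    (hζ₂ : ζ₂ ∈ Set.Ioo (0 : ℝ) 1) :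
    ∃ C : ℝ, ∀ H₁ H₂ : ℝ → ℝ, IsSingularKernel ζ₁ 2 H₁ → IsSingularKernel ζ₂ 2 H₂ →
      ∀ α : ℝ, α ≠ 0 →
        ∫⁻ p : ℝ × ℝ,
            ENNReal.ofReal
              (|boxOp H₁ α p.1 p.2 * boxOp H₂ α p.1 p.2| / (p.1 ^ 2 * p.2 ^ 2))
          ≤ ENNReal.ofReal
              (C * singNorm ζ₁ 2 H₁ * singNorm ζ₂ 2 H₂ * |α| ^ (ζ₁ + ζ₂ - 2)) := by
  refine ⟨100 ^ 2 * (∫ t, boxMajorant ζ₁ t) * ∫ t, boxMajorant ζ₂ t, ?_⟩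
  intro H₁ H₂ hH₁ hH₂ α hα
  let quotient (H : ℝ → ℝ) (p : ℝ × ℝ) : ℝ := boxOp H α p.1 p.2 / (p.1 * p.2)
  have hfactor (p : ℝ × ℝ) : |boxOp H₁ α p.1 p.2 * boxOp H₂ α p.1 p.2| / (p.1 ^ 2 * p.2 ^ 2) =
      |quotient H₁ p * quotient H₂ p| := by
    rw [div_mul_div_comm, abs_div, ← sq, abs_sq, mul_pow]
  have hαpow : |α| ^ (ζ₁ + ζ₂ - 2) = |α| ^ (ζ₁ - 1) * |α| ^ (ζ₂ - 1) := by
    rw [← Real.rpow_add (abs_pos.2 hα)]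
    ring_nf
  have hN := singNorm_nonneg ζ₁ 2 H₁
  have hI : 0 ≤ ∫ t, boxMajorant ζ₁ t := integral_nonneg (boxMajorant_nonneg ζ₁)
  simp_rw [hfactor]
  refine (lintegral_abs_mul_le_eLpNorm_two
    (hH₁.measurable_boxOp_div two_pos α).aestronglyMeasurable
    (hH₂.measurable_boxOp_div two_pos α).aestronglyMeasurable).trans
    ((mul_le_mul' (hH₁.eLpNorm_boxOp_div_le one_lt_two hζ₁ hα)
      (hH₂.eLpNorm_boxOp_div_le one_lt_two hζ₂ hα)).trans_eq ?_)
  rw [← ENNReal.ofReal_mul (by positivity), hαpow]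
  congr 1
  ring

/-- For `θ ∈ (0,1)` there is `C < ∞` such that for all continuous `H₁, H₂`, twice
continuously differentiable away from `0` with finite `‖·‖_{1-θ;2}` norms, and all
`α ≠ 0`, `∬ |□H₁(α;y,z) □H₂(α;y,z)| / (y² z²) dy dz ≤ C ‖H₁‖ ‖H₂‖ |α|^(-2θ)`. -/
theorem boxOp_double_integral_bound (θ : ℝ) (hθ : θ ∈ Set.Ioo (0 : ℝ) 1) :
    ∃ C : ℝ, ∀ H₁ H₂ : ℝ → ℝ, Continuous H₁ → Continuous H₂ →
      ContDiffOn ℝ 2 H₁ {(0 : ℝ)}ᶜ → ContDiffOn ℝ 2 H₂ {(0 : ℝ)}ᶜ →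
      BddAbove (singSet (1 - θ) 2 H₁) → BddAbove (singSet (1 - θ) 2 H₂) →
      ∀ α : ℝ, α ≠ 0 →
        ∫⁻ p : ℝ × ℝ,
            ENNReal.ofReal
              (|boxOp H₁ α p.1 p.2 * boxOp H₂ α p.1 p.2| / (p.1 ^ 2 * p.2 ^ 2))
          ≤ ENNReal.ofReal
              (C * singNorm (1 - θ) 2 H₁ * singNorm (1 - θ) 2 H₂ * |α| ^ (-(2 * θ))) := by
  have hζ : 1 - θ ∈ Set.Ioo (0 : ℝ) 1 := by constructor <;> linarith [hθ.1, hθ.2]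
  obtain ⟨C, hC⟩ := boxOp_double_integral_bound_general hζ hζ
  refine ⟨C, fun H₁ H₂ _ _ hd₁ hd₂ hb₁ hb₂ α hα => ?_⟩
  rw [show -(2 * θ) = 1 - θ + (1 - θ) - 2 by ring]
  exact hC H₁ H₂ (.of_contDiffOn hd₁ hb₁) (.of_contDiffOn hd₂ hb₂) α hα
end

section
/- Let −1 < α < 0 < β < 1 and T < ∞. There is a constant C < ∞ such that for every bounded continuous f: ℝ → ℝ with N_α(f) < ∞ and every t ∈ (0,T], the convolution P_t∗f(x) = ∫_ℝ P_t(x−y) f(y) dy satisfies ‖P_t∗f‖_{C^β} ≤ C t^{−(β−α)} N_α(f). (Schauder estimate for the Cauchy kernel, i.e. the semigroup generated by the negative half-Laplacian.) -/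
/-!
Since `N_α(f)` is a supremum over all `C¹` test functions bounded by one, `L¹`-`L^∞` duality turns
it into a local `L¹` bound: mollifying `sign f` on a ball gives `∫_{B(x,l/2)} |f| ≤ l^{1+α} N_α(f)`
for `l ≤ 1`. The Cauchy kernel varies by at most a factor `3` at distances up to `t`, so averaging
over balls of radius `l/2` with `l` comparable to `t` upgrades this to `P_t ∗ |f| ≲ t^α N_α(f)`.
The Hölder bound follows because an increment of `P_t` over a distance `d` is at most `(d/t)^β`
times the sum of the two values of `P_t`.
-/

open MeasureTheory

/-- The Cauchy kernel `P_t(x) = t / (π (t² + x²))`, the kernel of the semigroup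
generated by the negative half-Laplacian. -/
noncomputable def cauchyKer (t x : ℝ) : ℝ := t / (Real.pi * (t ^ 2 + x ^ 2))

/-- A test function: `C¹`, supported in `[-1,1]`, with `sup |η| ≤ 1`. -/
def IsTestFn (η : ℝ → ℝ) : Prop :=
  ContDiff ℝ 1 η ∧ (∀ y, y ∉ Set.Icc (-1 : ℝ) 1 → η y = 0) ∧ ∀ y, |η y| ≤ 1

/-- The set whose supremum is the `C^α` distributional norm `N_α(f)`. -/
noncomputable def distSet (α : ℝ) (f : ℝ → ℝ) : Set ℝ :=
  {r | ∃ (x l : ℝ) (η : ℝ → ℝ), 0 < l ∧ l ≤ 1 ∧ IsTestFn η ∧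
    r = l ^ (-α) * |∫ y : ℝ, f y * (l⁻¹ * η (l⁻¹ * (y - x)))|}

/-- The `C^α`-Hölder norm of `f` as a distribution. -/
noncomputable def distNorm (α : ℝ) (f : ℝ → ℝ) : ℝ := sSup (distSet α f)

open Filter Metric Topology
open scoped ContDiff Convolution ENNReal

section Mollification

variable {E F : Type*} [NormedAddCommGroup E] [NormedSpace ℝ E] [FiniteDimensional ℝ E]
  [MeasurableSpace E] [BorelSpace E] [NormedAddCommGroup F] [NormedSpace ℝ F] [CompleteSpace F]

lemma exists_contDiff_tendsto_ae_of_norm_le {μ : Measure E} [μ.IsAddHaarMeasure] {h : E → F}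
    (hm : AEStronglyMeasurable h μ) {M : ℝ} (hM : ∀ y, ‖h y‖ ≤ M) {x : E} {r l : ℝ} (hrl : r < l)
    (hsupp : ∀ y ∉ closedBall x r, h y = 0) :
    ∃ g : ℕ → E → F, (∀ n, ContDiff ℝ ∞ (g n)) ∧ (∀ n y, ‖g n y‖ ≤ M) ∧
      (∀ n, ∀ y ∉ ball x l, g n y = 0) ∧ ∀ᵐ y ∂μ, Tendsto (g · y) atTop (𝓝 (h y)) := by
  have hloc : LocallyIntegrable h μ :=
    (memLp_top_of_bound hm M (ae_of_all _ hM)).locallyIntegrable le_top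
  have hδ (n : ℕ) : 0 < (l - r) / (n + 1) := div_pos (sub_pos.2 hrl) n.cast_add_one_pos
  let φ (n : ℕ) : ContDiffBump (0 : E) :=
    ⟨(l - r) / (n + 1) / 2, (l - r) / (n + 1), half_pos (hδ n), half_lt_self (hδ n)⟩
  have hφ_lim : Tendsto (fun n ↦ (φ n).rOut) atTop (𝓝 0) := by
    simpa only [mul_one_div, mul_zero] using
      tendsto_one_div_add_atTop_nhds_zero_nat.const_mul (l - r)
  have hφ_le (n : ℕ) : (φ n).rOut ≤ l - r :=
    div_le_self (sub_pos.2 hrl).le (le_add_of_nonneg_left n.cast_nonneg)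
  have hφ_ratio (n : ℕ) : (φ n).rOut ≤ 2 * (φ n).rIn := (mul_div_cancel₀ _ two_ne_zero).ge
  have norm_conv_le (n : ℕ) {y : E} {ε : ℝ} (hε : 0 ≤ ε)
      (hy : ∀ z ∈ ball y (φ n).rOut, ‖h z‖ ≤ ε) :
      ‖((φ n).normed μ ⋆[.lsmul ℝ ℝ, μ] h) y‖ ≤ ε := by
    simpa only [dist_zero_right] using dist_convolution_le (z₀ := (0 : F)) hε
      (φ n).support_normed_eq.subset (φ n).nonneg_normed (φ n).integral_normed hm
      fun z hz ↦ (dist_zero_right (h z)).trans_le (hy z hz)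
  refine ⟨fun n ↦ (φ n).normed μ ⋆[.lsmul ℝ ℝ, μ] h, fun n ↦ ?_, fun n y ↦ ?_, fun n y hy ↦ ?_, ?_⟩
  · exact (φ n).hasCompactSupport_normed.contDiff_convolution_left _ (φ n).contDiff_normed hloc
  · exact norm_conv_le n ((norm_nonneg _).trans (hM 0)) fun z _ ↦ hM z
  · refine norm_le_zero_iff.1 (norm_conv_le n le_rfl fun z hz ↦ (norm_eq_zero.2 (hsupp z ?_)).le)
    intro hzr
    refine hy (mem_ball.2 ?_)
    linarith [dist_triangle_left y x z, mem_ball.1 hz, mem_closedBall.1 hzr, hφ_le n]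
  · exact ContDiffBump.ae_convolution_tendsto_right_of_locallyIntegrable hφ_lim
      (.of_forall hφ_ratio) hloc

end Mollification

section DistNorm

variable {α : ℝ} {f : ℝ → ℝ}

lemma exists_isTestFn_tendsto_ae {h : ℝ → ℝ} (hm : AEStronglyMeasurable h) (h_le : ∀ y, |h y| ≤ 1)
    {x r l : ℝ} (hl : 0 < l) (hrl : r < l) (hsupp : ∀ y ∉ closedBall x r, h y = 0) :
    ∃ η : ℕ → ℝ → ℝ, (∀ n, IsTestFn (η n)) ∧
      ∀ᵐ y, Tendsto (fun n ↦ η n (l⁻¹ * (y - x))) atTop (𝓝 (h y)) := by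
  obtain ⟨g, hg_smooth, hg_le, hg_zero, hg_lim⟩ :=
    exists_contDiff_tendsto_ae_of_norm_le hm h_le hrl hsupp
  refine ⟨fun n u ↦ g n (x + l * u), fun n ↦ ⟨?_, fun u hu ↦ hg_zero n _ ?_, fun u ↦ hg_le n _⟩, ?_⟩
  · exact ((hg_smooth n).of_le (by simp)).comp (by fun_prop)
  · contrapose! hu
    rw [mem_ball, Real.dist_eq, add_sub_cancel_left, abs_mul, abs_of_pos hl,
      mul_lt_iff_lt_one_right hl] at hu
    exact abs_le.1 hu.le
  · simpa only [mul_inv_cancel_left₀ hl.ne', add_sub_cancel] using hg_lim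

lemma distNorm_nonneg (α : ℝ) (f : ℝ → ℝ) : 0 ≤ distNorm α f := by
  refine Real.sSup_nonneg ?_
  rintro _ ⟨x, l, η, hl, -, -, rfl⟩
  positivity

lemma IsTestFn.abs_integral_mul_le_distNorm {η : ℝ → ℝ} (hη : IsTestFn η)
    (hb : BddAbove (distSet α f)) {l : ℝ} (hl : 0 < l) (hl1 : l ≤ 1) (x : ℝ) :
    |∫ y, f y * (l⁻¹ * η (l⁻¹ * (y - x)))| ≤ l ^ α * distNorm α f := by
  rw [← inv_mul_le_iff₀ (Real.rpow_pos_of_pos hl α), ← Real.rpow_neg hl.le]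
  exact le_csSup hb ⟨x, l, η, hl, hl1, hη, rfl⟩

lemma IsTestFn.abs_rescaled_le_indicator {η : ℝ → ℝ} (hη : IsTestFn η) {l : ℝ} (hl : 0 < l)
    (x y : ℝ) : |η (l⁻¹ * (y - x))| ≤ (closedBall x l).indicator (fun _ ↦ 1) y := by
  by_cases hy : y ∈ closedBall x l
  · simpa only [Set.indicator_of_mem hy] using hη.2.2 _
  · rw [Set.indicator_of_notMem hy, hη.2.1 _ fun hu ↦ hy ?_, abs_zero]
    have := abs_le.2 hu
    rwa [abs_mul, abs_inv, abs_of_pos hl, inv_mul_le_iff₀ hl, mul_one] at this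

lemma tendsto_integral_mul_of_isTestFn (hf : LocallyIntegrable f) {h : ℝ → ℝ} {η : ℕ → ℝ → ℝ}
    (hη : ∀ n, IsTestFn (η n)) {x l : ℝ} (hl : 0 < l)
    (hη_lim : ∀ᵐ y, Tendsto (fun n ↦ η n (l⁻¹ * (y - x))) atTop (𝓝 (h y))) :
    Tendsto (fun n ↦ ∫ y, f y * (l⁻¹ * η n (l⁻¹ * (y - x)))) atTop
      (𝓝 (∫ y, f y * (l⁻¹ * h y))) := by
  refine tendsto_integral_of_dominated_convergence
    (fun y ↦ l⁻¹ * (closedBall x l).indicator (fun y ↦ |f y|) y) (fun n ↦ ?_) ?_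
    (fun n ↦ ae_of_all _ fun y ↦ ?_) ?_
  · have := (hη n).1.continuous
    exact hf.aestronglyMeasurable.mul (by fun_prop : Continuous _).aestronglyMeasurable
  · have hfi : IntegrableOn (fun y ↦ |f y|) (closedBall x l) :=
      (hf.integrableOn_isCompact (isCompact_closedBall x l)).abs
    exact (hfi.integrable_indicator measurableSet_closedBall).const_mul _
  · rw [Real.norm_eq_abs, abs_mul, abs_mul, abs_of_pos (inv_pos.2 hl), mul_left_comm]
    gcongr
    calc |f y| * |η n (l⁻¹ * (y - x))|
        ≤ |f y| * (closedBall x l).indicator (fun _ ↦ 1) y := by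
          gcongr
          exact (hη n).abs_rescaled_le_indicator hl x y
      _ = (closedBall x l).indicator (fun y ↦ |f y|) y := by
          simp only [← Set.indicator_mul_right _ (fun y ↦ |f y|), mul_one]
  · filter_upwards [hη_lim] with y hy using (hy.const_mul _).const_mul _

lemma integral_mul_le_distNorm (hf : LocallyIntegrable f) (hb : BddAbove (distSet α f))
    {h : ℝ → ℝ} (hm : AEStronglyMeasurable h) (h_le : ∀ y, |h y| ≤ 1) {x r l : ℝ} (hl : 0 < l)
    (hl1 : l ≤ 1) (hrl : r < l) (hsupp : ∀ y ∉ closedBall x r, h y = 0) :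
    ∫ y, f y * h y ≤ l * (l ^ α * distNorm α f) := by
  obtain ⟨η, hη, hη_lim⟩ := exists_isTestFn_tendsto_ae hm h_le hl hrl hsupp
  have hle : ∫ y, f y * (l⁻¹ * h y) ≤ l ^ α * distNorm α f :=
    le_of_tendsto' (tendsto_integral_mul_of_isTestFn hf hη hl hη_lim) fun n ↦
      (le_abs_self _).trans ((hη n).abs_integral_mul_le_distNorm hb hl hl1 x)
  simp only [mul_left_comm _ l⁻¹, integral_const_mul] at hle
  exact (inv_mul_le_iff₀ hl).1 hle

lemma setIntegral_abs_le_distNorm (hf : LocallyIntegrable f) (hb : BddAbove (distSet α f))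
    {l r : ℝ} (hl : 0 < l) (hl1 : l ≤ 1) (hrl : r < l) (x : ℝ) :
    ∫ y in closedBall x r, |f y| ≤ l * (l ^ α * distNorm α f) := by
  -- `f / |f|` is the sign of `f`, including where `f = 0` because `0 / 0 = 0`.
  let h : ℝ → ℝ := (closedBall x r).indicator fun y ↦ f y / |f y|
  have hfm := hf.aestronglyMeasurable.aemeasurable
  have hm : AEStronglyMeasurable h :=
    ((hfm.div hfm.abs).indicator measurableSet_closedBall).aestronglyMeasurable
  have h_le (y : ℝ) : |h y| ≤ 1 := by
    refine (norm_indicator_le_norm_self (fun y ↦ f y / |f y|) y).trans ?_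
    rw [Real.norm_eq_abs, abs_div, abs_abs]
    exact div_self_le_one _
  have mul_sign (y : ℝ) : f y * (f y / |f y|) = |f y| := by
    rw [← mul_div_assoc, ← abs_mul_abs_self, mul_self_div_self]
  have hdual := integral_mul_le_distNorm hf hb hm h_le hl hl1 hrl
    fun y hy ↦ Set.indicator_of_notMem hy _
  simpa only [h, ← Set.indicator_mul_right, mul_sign,
    integral_indicator measurableSet_closedBall] using hdual

lemma setLIntegral_enorm_le_distNorm (hf : LocallyIntegrable f) (hb : BddAbove (distSet α f))
    {l r : ℝ} (hl : 0 < l) (hl1 : l ≤ 1) (hrl : r < l) (x : ℝ) :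
    ∫⁻ y in closedBall x r, ‖f y‖ₑ ≤ ENNReal.ofReal (l * (l ^ α * distNorm α f)) := by
  rw [← ofReal_integral_norm_eq_lintegral_enorm
    (hf.integrableOn_isCompact (isCompact_closedBall x r))]
  exact ENNReal.ofReal_le_ofReal (setIntegral_abs_le_distNorm hf hb hl hl1 hrl x)

end DistNorm

section Averaging

lemma mul_lintegral_mul_le_of_lintegral_closedBall_le {X : Type*} [PseudoMetricSpace X]
    [MeasurableSpace X] [OpensMeasurableSpace X] [SecondCountableTopology X] {μ : Measure X}
    [SFinite μ] {k F : X → ℝ≥0∞} (hk : AEMeasurable k μ) (hF : AEMeasurable F μ) {r : ℝ}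
    {c V K : ℝ≥0∞} (hV : ∀ y, V ≤ μ (closedBall y r))
    (hk_le : ∀ y z, dist y z ≤ r → k y ≤ c * k z)
    (hK : ∀ z, ∫⁻ y in closedBall z r, F y ∂μ ≤ K) :
    V * ∫⁻ y, k y * F y ∂μ ≤ c * K * ∫⁻ z, k z ∂μ := by
  let A : Set (X × X) := {p | dist p.2 p.1 ≤ r}
  have hA : MeasurableSet A := (isClosed_le (by fun_prop) continuous_const).measurableSet
  let G (y z : X) : ℝ≥0∞ := A.indicator (fun p ↦ c * k p.2 * F p.1) (y, z)
  have hG_left (y z : X) : G y z = (closedBall y r).indicator (fun z ↦ c * k z * F y) z := rfl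
  have hG_right (y z : X) : G y z = (closedBall z r).indicator (fun y ↦ c * k z * F y) y := by
    classical
    simp only [hG_left, Set.indicator_apply, mem_closedBall_comm]
  have hG : AEMeasurable (Function.uncurry G) (μ.prod μ) :=
    ((hk.comp_snd.const_mul c).mul hF.comp_fst).indicator hA
  calc V * ∫⁻ y, k y * F y ∂μ
      ≤ ∫⁻ y, V * (k y * F y) ∂μ := lintegral_const_mul_le _ _
    _ ≤ ∫⁻ y, ∫⁻ z, G y z ∂μ ∂μ := by
        refine lintegral_mono fun y ↦ ?_
        calc V * (k y * F y)
            ≤ ∫⁻ _ in closedBall y r, k y * F y ∂μ := by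
              rw [setLIntegral_const, mul_comm]
              gcongr
              exact hV y
          _ ≤ ∫⁻ z in closedBall y r, c * k z * F y ∂μ :=
              setLIntegral_mono' measurableSet_closedBall fun z hz ↦
                mul_le_mul_left (hk_le y z (mem_closedBall'.1 hz)) _
          _ = ∫⁻ z, G y z ∂μ := by
              simp only [hG_left, lintegral_indicator measurableSet_closedBall]
    _ = ∫⁻ z, ∫⁻ y, G y z ∂μ ∂μ := lintegral_lintegral_swap hG
    _ ≤ ∫⁻ z, c * K * k z ∂μ := by
        refine lintegral_mono fun z ↦ ?_
        calc ∫⁻ y, G y z ∂μ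
            = ∫⁻ y in closedBall z r, c * k z * F y ∂μ := by
              simp only [hG_right, lintegral_indicator measurableSet_closedBall]
          _ = c * k z * ∫⁻ y in closedBall z r, F y ∂μ := lintegral_const_mul'' _ hF.restrict
          _ ≤ c * k z * K := by gcongr; exact hK z
          _ = c * K * k z := mul_right_comm _ _ _
    _ = c * K * ∫⁻ z, k z ∂μ := lintegral_const_mul'' _ hk

end Averaging

lemma min_one_le_rpow {s β : ℝ} (hs : 0 ≤ s) (hβ : β ∈ Set.Icc (0 : ℝ) 1) : min 1 s ≤ s ^ β := by
  rcases le_total 1 s with h | h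
  · exact (min_le_left _ _).trans (Real.one_le_rpow h hβ.1)
  · calc min 1 s ≤ s ^ (1 : ℝ) := (min_le_right _ _).trans_eq (Real.rpow_one s).symm
      _ ≤ s ^ β := Real.rpow_le_rpow_of_exponent_ge' hs h hβ.1 hβ.2

section CauchyKernel

variable {t : ℝ}

lemma cauchyKer_pos (ht : 0 < t) (x : ℝ) : 0 < cauchyKer t x := by
  unfold cauchyKer
  positivity

lemma continuous_cauchyKer (ht : 0 < t) : Continuous (cauchyKer t) :=
  continuous_const.div (by fun_prop) fun x ↦ by positivity

lemma lintegral_cauchyKer_sub (ht : 0 < t) (x : ℝ) :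
    ∫⁻ y, ENNReal.ofReal (cauchyKer t (x - y)) = 1 := by
  lift t to NNReal using ht.le
  rw [← ProbabilityTheory.lintegral_cauchyPDF_eq_one x (NNReal.coe_pos.1 ht).ne']
  congr with y
  congr 1
  rw [cauchyKer, ProbabilityTheory.cauchyPDFReal_def]
  field_simp
  ring

lemma cauchyKer_le_three_mul (ht : 0 < t) {a b : ℝ} (h : |a - b| ≤ t) :
    cauchyKer t a ≤ 3 * cauchyKer t b := by
  have hsq : (a - b) ^ 2 ≤ t ^ 2 := sq_le_sq.2 (h.trans (le_abs_self t))
  have hdenom : t ^ 2 + b ^ 2 ≤ 3 * (t ^ 2 + a ^ 2) := by nlinarith [sq_nonneg (2 * a - b)]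
  unfold cauchyKer
  rw [← mul_div_assoc, div_le_div_iff₀ (by positivity) (by positivity)]
  calc t * (Real.pi * (t ^ 2 + b ^ 2)) ≤ t * (Real.pi * (3 * (t ^ 2 + a ^ 2))) := by gcongr
    _ = 3 * t * (Real.pi * (t ^ 2 + a ^ 2)) := by ring

lemma abs_cauchyKer_sub_le_div_mul (ht : 0 < t) (a b : ℝ) :
    |cauchyKer t a - cauchyKer t b| ≤ |a - b| / t * (cauchyKer t a + cauchyKer t b) := by
  let w := Real.pi * (t ^ 2 + a ^ 2) * (t ^ 2 + b ^ 2)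
  have hw : 0 < w := by positivity
  have hdiff : cauchyKer t a - cauchyKer t b = (b - a) * (t * (a + b)) / w := by
    simp only [cauchyKer, w]
    field_simp
    ring
  have hsum : |a - b| / t * (cauchyKer t a + cauchyKer t b) =
      |b - a| * (2 * t ^ 2 + a ^ 2 + b ^ 2) / w := by
    rw [abs_sub_comm]
    simp only [cauchyKer, w]
    field_simp
    ring
  have hamgm : |t * (a + b)| ≤ 2 * t ^ 2 + a ^ 2 + b ^ 2 :=
    abs_le.2 ⟨by nlinarith [sq_nonneg (t + a), sq_nonneg (t + b)],
      by nlinarith [sq_nonneg (t - a), sq_nonneg (t - b)]⟩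
  rw [hdiff, hsum, abs_div, abs_mul, abs_of_pos hw]
  gcongr

lemma abs_cauchyKer_sub_le_rpow_mul (ht : 0 < t) {β : ℝ} (hβ : β ∈ Set.Icc (0 : ℝ) 1) (a b : ℝ) :
    |cauchyKer t a - cauchyKer t b| ≤
      (|a - b| / t) ^ β * (cauchyKer t a + cauchyKer t b) := by
  have ha := cauchyKer_pos ht a
  have hb := cauchyKer_pos ht b
  calc |cauchyKer t a - cauchyKer t b|
      ≤ min 1 (|a - b| / t) * (cauchyKer t a + cauchyKer t b) := by
        rw [min_mul_of_nonneg _ _ (add_pos ha hb).le, one_mul]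
        exact le_min (abs_sub_le_of_nonneg_of_le ha.le (by linarith) hb.le (by linarith))
          (abs_cauchyKer_sub_le_div_mul ht a b)
    _ ≤ (|a - b| / t) ^ β * (cauchyKer t a + cauchyKer t b) := by
        gcongr
        exact min_one_le_rpow (by positivity) hβ

end CauchyKernel

section Convolution

variable {α β t l : ℝ} {f : ℝ → ℝ}

lemma lintegral_enorm_cauchyKer_mul_le (hf : LocallyIntegrable f) (hb : BddAbove (distSet α f))
    (ht : 0 < t) (hl : 0 < l) (hl1 : l ≤ 1) (hlt : l ≤ t) (x : ℝ) :
    ∫⁻ y, ‖cauchyKer t (x - y) * f y‖ₑ ≤ ENNReal.ofReal (3 * (l ^ α * distNorm α f)) := by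
  have hharnack (y z : ℝ) (hyz : dist y z ≤ l / 2) :
      ENNReal.ofReal (cauchyKer t (x - y)) ≤ 3 * ENNReal.ofReal (cauchyKer t (x - z)) := by
    rw [← ENNReal.ofReal_ofNat, ← ENNReal.ofReal_mul (by norm_num)]
    refine ENNReal.ofReal_le_ofReal (cauchyKer_le_three_mul ht ?_)
    rw [sub_sub_sub_cancel_left, ← Real.dist_eq, dist_comm]
    linarith
  have hmeas : Measurable fun y ↦ ENNReal.ofReal (cauchyKer t (x - y)) :=
    ((continuous_cauchyKer ht).measurable.comp (measurable_const.sub measurable_id)).ennreal_ofReal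
  have havg := mul_lintegral_mul_le_of_lintegral_closedBall_le hmeas.aemeasurable
    hf.aestronglyMeasurable.enorm
    (fun y ↦ ((Real.volume_closedBall y (l / 2)).trans (by rw [mul_div_cancel₀ l two_ne_zero])).ge)
    hharnack (setLIntegral_enorm_le_distNorm hf hb hl hl1 (half_lt_self hl))
  rw [lintegral_cauchyKer_sub ht, mul_one, ENNReal.ofReal_mul hl.le, mul_left_comm,
    ENNReal.mul_le_mul_iff_right (ENNReal.ofReal_pos.2 hl).ne' ENNReal.ofReal_ne_top] at havg
  simpa only [enorm_mul, Real.enorm_of_nonneg (cauchyKer_pos ht _).le,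
    ENNReal.ofReal_mul (zero_le_three : (0 : ℝ) ≤ 3), ENNReal.ofReal_ofNat] using havg

lemma integrable_cauchyKer_mul (hf : LocallyIntegrable f) (hb : BddAbove (distSet α f))
    (ht : 0 < t) (x : ℝ) : Integrable fun y ↦ cauchyKer t (x - y) * f y := by
  refine ⟨Continuous.aestronglyMeasurable ?_ |>.mul hf.aestronglyMeasurable, ?_⟩
  · exact (continuous_cauchyKer ht).comp (continuous_const.sub continuous_id)
  · exact (lintegral_enorm_cauchyKer_mul_le hf hb ht (lt_min one_pos ht) (min_le_left _ _)
      (min_le_right _ _) x).trans_lt ENNReal.ofReal_lt_top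

lemma integral_abs_cauchyKer_mul_le (hf : LocallyIntegrable f) (hb : BddAbove (distSet α f))
    (ht : 0 < t) (hl : 0 < l) (hl1 : l ≤ 1) (hlt : l ≤ t) (x : ℝ) :
    ∫ y, |cauchyKer t (x - y) * f y| ≤ 3 * (l ^ α * distNorm α f) := by
  have := distNorm_nonneg α f
  refine (ENNReal.ofReal_le_ofReal_iff (by positivity)).1 ?_
  exact (ofReal_integral_norm_eq_lintegral_enorm (integrable_cauchyKer_mul hf hb ht x)).trans_le
    (lintegral_enorm_cauchyKer_mul_le hf hb ht hl hl1 hlt x)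

lemma abs_integral_cauchyKer_mul_sub_le (ht : 0 < t) (hβ : β ∈ Set.Icc (0 : ℝ) 1)
    (hint : ∀ x, Integrable fun y ↦ cauchyKer t (x - y) * f y) {K : ℝ}
    (hK : ∀ x, ∫ y, |cauchyKer t (x - y) * f y| ≤ K) (x x' : ℝ) :
    |(∫ y, cauchyKer t (x - y) * f y) - ∫ y, cauchyKer t (x' - y) * f y| ≤
      (|x - x'| / t) ^ β * (2 * K) := by
  rw [← integral_sub (hint x) (hint x')]
  calc |∫ y, (cauchyKer t (x - y) * f y - cauchyKer t (x' - y) * f y)|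
      ≤ ∫ y, |cauchyKer t (x - y) * f y - cauchyKer t (x' - y) * f y| :=
        abs_integral_le_integral_abs
    _ ≤ ∫ y, (|x - x'| / t) ^ β * (|cauchyKer t (x - y) * f y| + |cauchyKer t (x' - y) * f y|) := by
        refine integral_mono ((hint x).sub (hint x')).abs
          (((hint x).abs.add (hint x').abs).const_mul _) fun y ↦ ?_
        have hker := abs_cauchyKer_sub_le_rpow_mul ht hβ (x - y) (x' - y)
        rw [sub_sub_sub_cancel_right] at hker
        simp only [← sub_mul, abs_mul, ← add_mul, ← mul_assoc, abs_of_pos (cauchyKer_pos ht _)]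
        gcongr
    _ = (|x - x'| / t) ^ β *
          ((∫ y, |cauchyKer t (x - y) * f y|) + ∫ y, |cauchyKer t (x' - y) * f y|) := by
        rw [integral_const_mul, integral_add (hint x).abs (hint x').abs]
    _ ≤ (|x - x'| / t) ^ β * (2 * K) := by
        rw [two_mul]
        gcongr <;> exact hK _

lemma integral_abs_cauchyKer_mul_le_of_le {T : ℝ} (hf : LocallyIntegrable f)
    (hb : BddAbove (distSet α f)) (ht : 0 < t) (htT : t ≤ T) (x : ℝ) :
    ∫ y, |cauchyKer t (x - y) * f y| ≤ 3 * (1 + T)⁻¹ ^ α * t ^ α * distNorm α f := by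
  have hT : 0 < 1 + T := by linarith
  have hscale : 0 < (1 + T)⁻¹ * t := by positivity
  have hscale_le_one : (1 + T)⁻¹ * t ≤ 1 := by rw [inv_mul_le_iff₀ hT]; linarith
  have hscale_le : (1 + T)⁻¹ * t ≤ t :=
    mul_le_of_le_one_left ht.le (inv_le_one_of_one_le₀ (by linarith))
  refine (integral_abs_cauchyKer_mul_le hf hb ht hscale hscale_le_one hscale_le x).trans_eq ?_
  rw [Real.mul_rpow (inv_pos.2 hT).le ht.le]
  ring

end Convolution

theorem cauchy_kernel_schauder_general (α T : ℝ) {β : ℝ} (hβ : β ∈ Set.Icc (0 : ℝ) 1) :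
    ∃ C : ℝ, ∀ f : ℝ → ℝ, LocallyIntegrable f → BddAbove (distSet α f) →
      ∀ t ∈ Set.Ioc 0 T,
        (∀ x : ℝ, Integrable fun y ↦ cauchyKer t (x - y) * f y) ∧
        ∀ x x' y' : ℝ, x' ≠ y' →
          |∫ y, cauchyKer t (x - y) * f y| +
              |(∫ y, cauchyKer t (x' - y) * f y) - ∫ y, cauchyKer t (y' - y) * f y| /
                |x' - y'| ^ β
            ≤ C * t ^ (-(β - α)) * distNorm α f := by
  let D : ℝ := 3 * (1 + T)⁻¹ ^ α
  refine ⟨D * T ^ β + 2 * D, fun f hf hb t ⟨ht, htT⟩ ↦ ?_⟩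
  have hint := integrable_cauchyKer_mul hf hb ht
  have hL1 (x : ℝ) : ∫ y, |cauchyKer t (x - y) * f y| ≤ D * t ^ α * distNorm α f :=
    integral_abs_cauchyKer_mul_le_of_le hf hb ht htT x
  refine ⟨hint, fun x x' y' hne ↦ ?_⟩
  have hT : 0 < T := ht.trans_le htT
  have hN := distNorm_nonneg α f
  have ht_rpow : t ^ α = t ^ β * t ^ (-(β - α)) := by
    rw [← Real.rpow_add ht, neg_sub, add_sub_cancel]
  have hd : 0 < |x' - y'| := abs_sub_pos.2 hne
  have hsup : |∫ y, cauchyKer t (x - y) * f y| ≤ D * T ^ β * t ^ (-(β - α)) * distNorm α f :=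
    calc _ ≤ D * t ^ α * distNorm α f := abs_integral_le_integral_abs.trans (hL1 x)
      _ = D * t ^ β * t ^ (-(β - α)) * distNorm α f := by rw [ht_rpow, ← mul_assoc D]
      _ ≤ D * T ^ β * t ^ (-(β - α)) * distNorm α f := by gcongr; exact hβ.1
  have hholder : |(∫ y, cauchyKer t (x' - y) * f y) - ∫ y, cauchyKer t (y' - y) * f y| /
      |x' - y'| ^ β ≤ 2 * D * t ^ (-(β - α)) * distNorm α f := by
    rw [div_le_iff₀ (by positivity)]
    refine (abs_integral_cauchyKer_mul_sub_le ht hβ hint hL1 x' y').trans_eq ?_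
    rw [Real.div_rpow hd.le ht.le, ht_rpow]
    field_simp
  linarith

/-- Schauder estimate for the Cauchy kernel: for `-1 < α < 0 < β < 1` and `T < ∞`
there is `C < ∞` such that for every bounded continuous `f` with `N_α(f) < ∞` and
every `t ∈ (0,T]`, the convolution `P_t∗f` is well-defined and
`‖P_t∗f‖_{C^β} ≤ C t^(-(β-α)) N_α(f)` (the `C^β` norm being the sup norm plus the
Hölder seminorm, expressed here pointwise). -/
theorem cauchy_kernel_schauder (α β T : ℝ) (hα : α ∈ Set.Ioo (-1 : ℝ) 0)
    (hβ : β ∈ Set.Ioo (0 : ℝ) 1) (hT : 0 < T) :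
    ∃ C : ℝ, ∀ f : ℝ → ℝ, Continuous f → (∃ M, ∀ x, |f x| ≤ M) →
      BddAbove (distSet α f) →
      ∀ t : ℝ, t ∈ Set.Ioc 0 T →
        (∀ x : ℝ, Integrable (fun y => cauchyKer t (x - y) * f y)) ∧
        ∀ x x' y' : ℝ, x' ≠ y' → |x' - y'| ≤ 1 →
          |∫ y : ℝ, cauchyKer t (x - y) * f y| +
              |(∫ y : ℝ, cauchyKer t (x' - y) * f y) -
                  ∫ y : ℝ, cauchyKer t (y' - y) * f y| / |x' - y'| ^ β
            ≤ C * t ^ (-(β - α)) * distNorm α f := by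
  obtain ⟨C, hC⟩ := cauchy_kernel_schauder_general α T (Set.Ioo_subset_Icc_self hβ)
  refine ⟨C, fun f hf _ hb t ht ↦ ?_⟩
  obtain ⟨hint, hbound⟩ := hC f hf.locallyIntegrable hb t ht
  exact ⟨hint, fun x x' y' hne _ ↦ hbound x x' y' hne⟩
end
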